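/- arXiv:math/0601334 — 15 statements merged into one kernel-verified Lean document; each statement's English description precedes it below -/
import Mathlib

section
/- Let d ≥ 1 be an integer, let d_1,…,d_d be positive integers, let K be a field and let z, σ ∈ K satisfy σ ≠ 0, σ^{d_i} ≠ 1 for all i, and z + σ ≠ 0. Then (1/(z+σ))·[ ∏_{i=1}^d (1+z·σ^{d_i−1})/(1−σ^{d_i}) − 1 ] = Σ_{p=0}^{d−1} z^p · g_a(p,σ), where g_a(p,σ) = (−1)^{d+1+p}·[ Σ_{q=0}^{d−1−p} (−1)^q e_{d−q}(σ^{d_1},…,σ^{d_d}) ] / ( σ^{p+1} ∏_{i=1}^d (1−σ^{d_i}) ). In other words, the coefficient of z^p in the absolute coexact double Poincaré series equals the closed-form absolute coexact p-form degeneracy generating function. -/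
open Finset

/-!
With `w = z / σ` and `x i = σ ^ dd i`, the series is
`(∏ i, (1 + w * x i) - ∏ i, (1 - x i)) / (σ * (w + 1) * ∏ i, (1 - x i))`. By Vieta the numerator is
`∑ k, e_k(x) * (w ^ k - (-1) ^ k)`, in which every term is divisible by `w + 1`; summing the
geometric quotients by powers of `w` gives the alternating partial sums of the `e_k(x)`.
-/

lemma sum_range_succ_sum_range_reflect {M : Type*} [AddCommMonoid M] (n : ℕ) (f : ℕ → ℕ → M) :
    ∑ k ∈ range (n + 1), ∑ p ∈ range k, f k p =
      ∑ p ∈ range n, ∑ q ∈ range (n - p), f (n - q) p := by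
  rw [sum_sigma', sum_sigma']
  refine sum_nbij' (fun a => ⟨a.2, n - a.1⟩) (fun b => ⟨n - b.2, b.1⟩) ?_ ?_ ?_ ?_ ?_ <;>
    grind

section

variable {ι R : Type*}

lemma sum_mul_pow_sub_pow [CommRing R] (a : ℕ → R) (u v : R) (n : ℕ) :
    ∑ k ∈ range (n + 1), a k * (u ^ k - v ^ k) =
      (u - v) * ∑ p ∈ range n, u ^ p * ∑ q ∈ range (n - p), v ^ (n - q - 1 - p) * a (n - q) := by
  calc ∑ k ∈ range (n + 1), a k * (u ^ k - v ^ k)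
    _ = (u - v) * ∑ k ∈ range (n + 1), ∑ p ∈ range k, u ^ p * (v ^ (k - 1 - p) * a k) := by
      rw [mul_sum]
      refine sum_congr rfl fun k _ => ?_
      rw [← (Commute.all u v).mul_geom_sum₂, mul_left_comm, mul_sum]
      exact congrArg _ (sum_congr rfl fun p _ => by ring)
    _ = _ := by
      simp only [sum_range_succ_sum_range_reflect, mul_sum]

lemma prod_one_add_mul_eq_sum_esymm_mul_pow [CommSemiring R] (s : Finset ι) (x : ι → R) (w : R) :
    ∏ i ∈ s, (1 + w * x i) =
      ∑ k ∈ range (#s + 1), (∑ t ∈ powersetCard k s, ∏ i ∈ t, x i) * w ^ k := by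
  rw [prod_one_add, sum_powerset]
  refine sum_congr rfl fun k _ => ?_
  rw [sum_mul]
  refine sum_congr rfl fun t ht => ?_
  rw [prod_mul_distrib, prod_const, (mem_powersetCard.1 ht).2, mul_comm]

lemma prod_one_add_mul_sub_prod_one_sub [CommRing R] (s : Finset ι) (x : ι → R) (w : R) :
    ∏ i ∈ s, (1 + w * x i) - ∏ i ∈ s, (1 - x i) =
      (w + 1) * ∑ p ∈ range #s, w ^ p * ((-1) ^ (#s + 1 + p) *
        ∑ q ∈ range (#s - p), (-1) ^ q * ∑ t ∈ powersetCard (#s - q) s, ∏ i ∈ t, x i) := by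
  have sign {p q : ℕ} (hq : q < #s - p) :
      (-1 : R) ^ (#s - q - 1 - p) = (-1) ^ (#s + 1 + p) * (-1) ^ q := by
    rw [← pow_add]
    exact neg_one_pow_congr (by grind)
  have one_sub : ∏ i ∈ s, (1 - x i) = ∏ i ∈ s, (1 + -1 * x i) := by
    simp only [neg_one_mul, sub_eq_add_neg]
  rw [one_sub, prod_one_add_mul_eq_sum_esymm_mul_pow, prod_one_add_mul_eq_sum_esymm_mul_pow,
    ← sum_sub_distrib]
  simp only [← mul_sub]
  rw [sum_mul_pow_sub_pow, sub_neg_eq_add]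
  refine congrArg _ (sum_congr rfl fun p _ => congrArg _ ?_)
  rw [mul_sum]
  exact sum_congr rfl fun q hq => by rw [sign (mem_range.1 hq), mul_assoc]

end

theorem absolute_double_poincare_series_general {ι K : Type*} [Field K] (s : Finset ι) (x : ι → K)
    (z σ : K) (hσ : σ ≠ 0) (hx : ∀ i ∈ s, x i ≠ 1) (hzσ : z + σ ≠ 0) :
    (z + σ)⁻¹ * ((∏ i ∈ s, (1 + z * (x i / σ)) / (1 - x i)) - 1) =
      ∑ p ∈ range #s, z ^ p *
        ((-1) ^ (#s + 1 + p) *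
            (∑ q ∈ range (#s - p), (-1) ^ q * ∑ t ∈ powersetCard (#s - q) s, ∏ i ∈ t, x i) /
          (σ ^ (p + 1) * ∏ i ∈ s, (1 - x i))) := by
  have prod_one_sub_ne_zero : ∏ i ∈ s, (1 - x i) ≠ 0 :=
    prod_ne_zero_iff.2 fun i hi => sub_ne_zero.2 (hx i hi).symm
  calc (z + σ)⁻¹ * ((∏ i ∈ s, (1 + z * (x i / σ)) / (1 - x i)) - 1)
    _ = (z + σ)⁻¹ * ((∏ i ∈ s, (1 + z / σ * x i) - ∏ i ∈ s, (1 - x i)) /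
          ∏ i ∈ s, (1 - x i)) := by
      simp only [mul_div_left_comm z, mul_comm (x _), prod_div_distrib,
        div_sub_one prod_one_sub_ne_zero]
    _ = (∑ p ∈ range #s, (z / σ) ^ p * ((-1) ^ (#s + 1 + p) *
          ∑ q ∈ range (#s - p), (-1) ^ q * ∑ t ∈ powersetCard (#s - q) s, ∏ i ∈ t, x i)) /
          (σ * ∏ i ∈ s, (1 - x i)) := by
      rw [prod_one_add_mul_sub_prod_one_sub]
      field_simp
    _ = _ := by
      rw [sum_div]
      refine sum_congr rfl fun p _ => ?_
      rw [div_pow, pow_succ]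
      field_simp

/-- the absolute coexact double Poincaré series equals the generating
function (in the fugacity `z`) of the closed-form absolute coexact `p`-form
degeneracy generating functions `g_a(p,σ)`. -/
theorem absolute_double_poincare_series
    (d : ℕ) (hd : 1 ≤ d) (dd : Fin d → ℕ) (hdd : ∀ i, 0 < dd i)
    (K : Type*) [Field K] (z σ : K) (hσ : σ ≠ 0)
    (hσd : ∀ i, σ ^ dd i ≠ 1) (hzσ : z + σ ≠ 0) :
    (z + σ)⁻¹ * ((∏ i, (1 + z * σ ^ (dd i - 1)) / (1 - σ ^ dd i)) - 1) =
      ∑ p ∈ range d, z ^ p *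
        ((-1 : K) ^ (d + 1 + p) *
            (∑ q ∈ range (d - p), (-1 : K) ^ q *
              ∑ t ∈ powersetCard (d - q) (univ : Finset (Fin d)), ∏ i ∈ t, σ ^ dd i) /
          (σ ^ (p + 1) * ∏ i, (1 - σ ^ dd i))) := by
  have pow_sub_one (i : Fin d) : σ ^ dd i / σ = σ ^ (dd i - 1) := by
    rw [← pow_sub_one_mul (hdd i).ne', mul_div_cancel_right₀ _ hσ]
  simpa only [pow_sub_one, card_fin] using
    absolute_double_poincare_series_general univ (σ ^ dd ·) z σ hσ (fun i _ => hσd i) hzσ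
end

section
/- Let d ≥ 1 be an integer, let d_1,…,d_d be positive integers, let K be a field and let z, σ ∈ K satisfy σ ≠ 0, σ^{d_i} ≠ 1 for all i, and 1 + zσ ≠ 0. Then (1/(1+zσ))·[ ∏_{i=1}^d (z+σ^{d_i−1})/(1−σ^{d_i}) + z^{d+1}σ ] = Σ_{p=0}^{d−1} z^p · g_r(p,σ) + z^d, where g_r(p,σ) = (−1)^{p}·[ Σ_{q=0}^{p} (−1)^q e_{d−q}(σ^{d_1},…,σ^{d_d}) ] / ( σ^{d−p} ∏_{i=1}^d (1−σ^{d_i}) ). In other words, the coefficient of z^p (for 0 ≤ p ≤ d−1) in the relative coexact double Poincaré series equals the closed-form relative coexact p-form degeneracy generating function, and the coefficient of z^d equals 1. -/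
open Finset

/-!
Put `w = z σ`, `x i = σ ^ d_i` and `f w = ∏ i, (w + x i) = ∑ q, e_{d-q}(x) w ^ q`. Abel summation
shows that `1 + w` divides `f w - (-w) ^ d * f (-1)`, where `(-w) ^ d * f (-1)` equals
`w ^ d * ∏ i, (1 - x i)`, and that the coefficients of the quotient are, up to sign, the truncated
alternating sums of the `e_{d-q}(x)`. After division by `σ ^ d * ∏ i, (1 - x i)` the subtracted
term becomes `z ^ d`, which combines with `z ^ (d + 1) σ` to `(1 + z σ) z ^ d`.
-/

section CommSemiring

variable {ι R : Type*} [CommSemiring R]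

theorem prod_add_eq_sum_pow_mul_esymm (s : Finset ι) (x : ι → R) (w : R) :
    ∏ i ∈ s, (w + x i) =
      ∑ q ∈ range (#s + 1), w ^ q * ∑ t ∈ powersetCard (#s - q) s, ∏ i ∈ t, x i := by
  have vieta := congrArg (Polynomial.eval w)
    (Multiset.prod_X_add_C_eq_sum_esymm (s.val.map x))
  simp only [Multiset.map_map, Function.comp_apply, prod_map_val, Multiset.card_map, card_val,
    esymm_map_val, Polynomial.eval_prod, Polynomial.eval_finsetSum, Polynomial.eval_add,
    Polynomial.eval_mul, Polynomial.eval_pow, Polynomial.eval_X, Polynomial.eval_C] at vieta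
  rw [vieta, ← sum_range_reflect]
  refine sum_congr rfl fun q hq ↦ ?_
  rw [Nat.add_sub_cancel, Nat.sub_sub_self (mem_range_succ_iff.mp hq), mul_comm]

theorem pow_card_mul_prod_add_pow_pred (s : Finset ι) {n : ι → ℕ} (hn : ∀ i ∈ s, 0 < n i)
    (z σ : R) :
    σ ^ #s * ∏ i ∈ s, (z + σ ^ (n i - 1)) = ∏ i ∈ s, (z * σ + σ ^ n i) := by
  rw [← prod_const, ← prod_mul_distrib]
  refine prod_congr rfl fun i hi ↦ ?_
  rw [mul_add, mul_pow_sub_one (hn i hi).ne', mul_comm]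

end CommSemiring

section CommRing

variable {ι R : Type*} [CommRing R]

theorem sum_range_succ_pow_mul_by_parts (v : R) (b : ℕ → R) (n : ℕ) :
    ∑ q ∈ range (n + 1), v ^ q * b q =
      (1 - v) * ∑ p ∈ range n, v ^ p * ∑ q ∈ range (p + 1), b q +
        v ^ n * ∑ q ∈ range (n + 1), b q := by
  have abel := sum_range_by_parts (fun q ↦ v ^ q) b (n + 1)
  have diff (p : ℕ) : v ^ (p + 1) - v ^ p = (v - 1) * v ^ p := by ring
  simp only [smul_eq_mul, Nat.add_sub_cancel, diff, mul_assoc, ← mul_sum] at abel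
  rw [abel]
  ring

/-- The truncated alternating sum `∑_{q ≤ p} (-1) ^ q e_{n-q}(x)` of elementary symmetric
polynomials in the `n = #s` variables `x i`, `i ∈ s`. For `x i = σ ^ d_i` it is, up to sign, the
numerator of `g_r(p, σ)`. -/
def altEsymmSum (s : Finset ι) (x : ι → R) (p : ℕ) : R :=
  ∑ q ∈ range (p + 1), (-1) ^ q * ∑ t ∈ powersetCard (#s - q) s, ∏ i ∈ t, x i

theorem neg_one_pow_mul_altEsymmSum_card (s : Finset ι) (x : ι → R) :
    (-1) ^ #s * altEsymmSum s x #s = ∏ i ∈ s, (1 - x i) := by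
  rw [altEsymmSum, ← prod_add_eq_sum_pow_mul_esymm, ← prod_const, ← prod_mul_distrib]
  exact prod_congr rfl fun i _ ↦ by ring

theorem prod_add_eq_one_add_mul_sum_altEsymmSum (s : Finset ι) (x : ι → R) (w : R) :
    ∏ i ∈ s, (w + x i) =
      (1 + w) * ∑ p ∈ range #s, (-w) ^ p * altEsymmSum s x p + w ^ #s * ∏ i ∈ s, (1 - x i) := by
  let e (q : ℕ) : R := ∑ t ∈ powersetCard (#s - q) s, ∏ i ∈ t, x i
  have sign (q : ℕ) (a : R) : w ^ q * a = (-w) ^ q * ((-1) ^ q * a) := by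
    rw [← mul_assoc, ← mul_pow, neg_mul_neg, mul_one]
  have remainder : (-w) ^ #s * altEsymmSum s x #s = w ^ #s * ∏ i ∈ s, (1 - x i) := by
    rw [← neg_one_pow_mul_altEsymmSum_card, neg_pow, mul_left_comm, mul_assoc]
  calc ∏ i ∈ s, (w + x i)
    _ = ∑ q ∈ range (#s + 1), (-w) ^ q * ((-1) ^ q * e q) := by
      rw [prod_add_eq_sum_pow_mul_esymm, sum_congr rfl fun q _ ↦ sign q _]
    _ = (1 - -w) * ∑ p ∈ range #s, (-w) ^ p * altEsymmSum s x p +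
          (-w) ^ #s * altEsymmSum s x #s := sum_range_succ_pow_mul_by_parts _ _ _
    _ = _ := by rw [remainder, sub_neg_eq_add]

end CommRing

section Field

variable {ι K : Type*} [Field K]

theorem pow_mul_neg_one_pow_mul_div {σ : K} (hσ : σ ≠ 0) {p d : ℕ} (hp : p ≤ d) (z a b : K) :
    z ^ p * ((-1) ^ p * a / (σ ^ (d - p) * b)) = (-(z * σ)) ^ p * a / (σ ^ d * b) := by
  obtain ⟨k, rfl⟩ := Nat.exists_eq_add_of_le hp
  rw [Nat.add_sub_cancel_left, pow_add, neg_pow (z * σ), mul_pow]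
  field_simp

theorem prod_add_pow_pred_div_one_sub_pow (s : Finset ι) (n : ι → ℕ) (z : K) {σ : K}
    (hσ : σ ≠ 0) (hσn : ∀ i ∈ s, σ ^ n i ≠ 1) :
    ∏ i ∈ s, (z + σ ^ (n i - 1)) / (1 - σ ^ n i) =
      (1 + z * σ) * ∑ p ∈ range #s, z ^ p * ((-1) ^ p * altEsymmSum s (fun i ↦ σ ^ n i) p /
        (σ ^ (#s - p) * ∏ i ∈ s, (1 - σ ^ n i))) + z ^ #s := by
  have hn (i) (hi : i ∈ s) : 0 < n i :=
    Nat.pos_of_ne_zero fun h ↦ hσn i hi (by rw [h, pow_zero])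
  have hden : ∏ i ∈ s, (1 - σ ^ n i) ≠ 0 :=
    prod_ne_zero_iff.mpr fun i hi ↦ sub_ne_zero.mpr (hσn i hi).symm
  have hσs : σ ^ #s ≠ 0 := pow_ne_zero _ hσ
  rw [sum_congr rfl fun p hp ↦ pow_mul_neg_one_pow_mul_div hσ (mem_range.mp hp).le z _ _,
    ← sum_div, prod_div_distrib, ← mul_div_mul_left _ _ hσs,
    pow_card_mul_prod_add_pow_pred s hn, prod_add_eq_one_add_mul_sum_altEsymmSum, mul_pow]
  field_simp

end Field

/-- the relative coexact double Poincaré series equals the generating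
function (in the fugacity `z`) of the closed-form relative coexact `p`-form
degeneracy generating functions `g_r(p,σ)`, plus `z^d` (coefficient 1 at rank `d`). -/
theorem relative_double_poincare_series
    (d : ℕ) (hd : 1 ≤ d) (dd : Fin d → ℕ) (hdd : ∀ i, 0 < dd i)
    (K : Type*) [Field K] (z σ : K) (hσ : σ ≠ 0)
    (hσd : ∀ i, σ ^ dd i ≠ 1) (hzσ : 1 + z * σ ≠ 0) :
    (1 + z * σ)⁻¹ * ((∏ i, (z + σ ^ (dd i - 1)) / (1 - σ ^ dd i)) + z ^ (d + 1) * σ) =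
      (∑ p ∈ range d, z ^ p *
        ((-1 : K) ^ p *
            (∑ q ∈ range (p + 1), (-1 : K) ^ q *
              ∑ t ∈ powersetCard (d - q) (univ : Finset (Fin d)), ∏ i ∈ t, σ ^ dd i) /
          (σ ^ (d - p) * ∏ i, (1 - σ ^ dd i)))) + z ^ d := by
  have division := prod_add_pow_pred_div_one_sub_pow univ dd z hσ fun i _ ↦ hσd i
  simp only [altEsymmSum, card_univ, Fintype.card_fin] at division
  rw [inv_mul_eq_iff_eq_mul₀ hzσ, division]
  ring
end

section
/- Let d ≥ 1 be an integer, let d_1,…,d_d be positive integers, let K be a field and let z, σ ∈ K satisfy z ≠ 0, σ ≠ 0, σ^{d_i} ≠ 1 for all i, z + σ ≠ 0 and 1 + zσ ≠ 0. Then the absolute and relative double Poincaré series satisfy the duality relation G_r(z,σ) = z^{d−1} · ( G_a(1/z, σ) + z ). -/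
open Finset

theorem prod_add_div_eq_pow_card_mul_prod {ι K : Type*} [Semifield K] {z : K} (hz : z ≠ 0)
    (s : Finset ι) (a b : ι → K) :
    ∏ i ∈ s, (z + a i) / b i = z ^ #s * ∏ i ∈ s, (1 + z⁻¹ * a i) / b i := by
  rw [pow_card_mul_prod]
  refine prod_congr rfl fun i _ ↦ ?_
  rw [← mul_div_assoc, mul_add, mul_one, mul_inv_cancel_left₀ hz]

theorem inv_inv_add_eq_inv_one_add_mul_mul {K : Type*} [DivisionSemiring K] {z : K} (hz : z ≠ 0)
    (σ : K) : (z⁻¹ + σ)⁻¹ = (1 + z * σ)⁻¹ * z := by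
  have factor : z⁻¹ + σ = z⁻¹ * (1 + z * σ) := by
    rw [mul_add, mul_one, inv_mul_cancel_left₀ hz]
  rw [factor, mul_inv_rev, inv_inv]

theorem inv_one_add_mul_mul_pow_mul_add {K : Type*} [Field K] {z σ : K} (hz : z ≠ 0)
    (hzσ : 1 + z * σ ≠ 0) (n : ℕ) (P : K) :
    (1 + z * σ)⁻¹ * (z ^ (n + 1) * P + z ^ (n + 2) * σ) =
      z ^ n * ((z⁻¹ + σ)⁻¹ * (P - 1) + z) :=
  calc
    _ = (1 + z * σ)⁻¹ * (z ^ (n + 1) * (P - 1) + (1 + z * σ) * z ^ (n + 1)) := by ring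
    _ = (1 + z * σ)⁻¹ * (z ^ (n + 1) * (P - 1)) + z ^ (n + 1) := by
      rw [mul_add, inv_mul_cancel_left₀ hzσ]
    _ = z ^ n * ((1 + z * σ)⁻¹ * z * (P - 1) + z) := by ring
    _ = _ := by rw [inv_inv_add_eq_inv_one_add_mul_mul hz]

/-- duality between the absolute and relative double Poincaré series:
`G_r(z,σ) = z^(d-1) * (G_a(1/z,σ) + z)`. -/
theorem double_poincare_series_duality
    (d : ℕ) (hd : 1 ≤ d) (dd : Fin d → ℕ) (hdd : ∀ i, 0 < dd i)
    (K : Type*) [Field K] (z σ : K) (hz : z ≠ 0) (hσ : σ ≠ 0)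
    (hσd : ∀ i, σ ^ dd i ≠ 1) (hzσ : z + σ ≠ 0) (hzσ' : 1 + z * σ ≠ 0) :
    (1 + z * σ)⁻¹ * ((∏ i, (z + σ ^ (dd i - 1)) / (1 - σ ^ dd i)) + z ^ (d + 1) * σ) =
      z ^ (d - 1) *
        ((z⁻¹ + σ)⁻¹ * ((∏ i, (1 + z⁻¹ * σ ^ (dd i - 1)) / (1 - σ ^ dd i)) - 1) + z) := by
  obtain ⟨n, rfl⟩ := Nat.exists_eq_add_of_le' hd
  rw [prod_add_div_eq_pow_card_mul_prod hz, card_univ, Fintype.card_fin, Nat.add_sub_cancel]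
  exact inv_one_add_mul_mul_pow_mul_add hz hzσ' n _
end

section
/- Let d ≥ 1 be an integer, let d_1,…,d_d be positive integers, let K be a field and let σ ∈ K satisfy σ ≠ 0 and σ^{d_i} ≠ 1 for all i (so that also σ^{−d_i} ≠ 1). Then for every 0 ≤ p ≤ d−1, the absolute coexact generating function evaluated at the inverted variable satisfies g_a(p, σ^{−1}) = (−1)^{p+1} σ^{p+1} · [ Σ_{q=0}^{d−1−p} (−1)^q e_{q}(σ^{d_1},…,σ^{d_d}) ] / ∏_{i=1}^d (1−σ^{d_i}). -/
open Finset

/-!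
Complementation `t ↦ s \ t` matches the monomials of `e_{n-q}(x⁻¹)` with those of `e_q(x)`, up to
the common factor `∏ xᵢ`; likewise `1 - xᵢ⁻¹ = -(1 - xᵢ) / xᵢ`. In the quotient defining `g_a` the
two factors `∏ xᵢ` cancel, leaving only the sign `(-1)^n`.
-/

lemma prod_inv_eq_prod_sdiff_div_prod {ι G₀ : Type*} [DecidableEq ι] [CommGroupWithZero G₀]
    {s t : Finset ι} {x : ι → G₀} (hts : t ⊆ s) (hx : ∀ i ∈ s \ t, x i ≠ 0) :
    ∏ i ∈ t, (x i)⁻¹ = (∏ i ∈ s \ t, x i) / ∏ i ∈ s, x i := by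
  rw [← prod_sdiff hts, div_mul_cancel_left₀ (prod_ne_zero_iff.mpr hx), prod_inv_distrib]

lemma sum_powersetCard_card_sub_prod_inv {ι K : Type*} [Semifield K] {s : Finset ι} {x : ι → K}
    {q : ℕ} (hx : ∀ i ∈ s, x i ≠ 0) (hq : q ≤ #s) :
    ∑ t ∈ powersetCard (#s - q) s, ∏ i ∈ t, (x i)⁻¹ =
      (∑ t ∈ powersetCard q s, ∏ i ∈ t, x i) / ∏ i ∈ s, x i := by
  classical
  rw [sum_div]
  refine sum_bij' (fun t _ => s \ t) (fun t _ => s \ t) ?_ ?_ ?_ ?_ ?_ <;>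
    intro t ht <;> obtain ⟨hts, htcard⟩ := mem_powersetCard.mp ht
  · exact mem_powersetCard.mpr
      ⟨sdiff_subset, by rw [card_sdiff_of_subset hts, htcard, Nat.sub_sub_self hq]⟩
  · exact mem_powersetCard.mpr ⟨sdiff_subset, by rw [card_sdiff_of_subset hts, htcard]⟩
  · exact Finset.sdiff_sdiff_eq_self hts
  · exact Finset.sdiff_sdiff_eq_self hts
  · exact prod_inv_eq_prod_sdiff_div_prod hts fun i hi => hx i (mem_sdiff.mp hi).1

section Field

variable {ι K : Type*} [Field K] {s : Finset ι} {x : ι → K}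

lemma prod_one_sub_inv (hx : ∀ i ∈ s, x i ≠ 0) :
    ∏ i ∈ s, (1 - (x i)⁻¹) = (-1) ^ #s * (∏ i ∈ s, (1 - x i)) / ∏ i ∈ s, x i := by
  rw [← prod_neg, ← prod_div_distrib]
  refine prod_congr rfl fun i hi => ?_
  rw [neg_sub, sub_div, div_self (hx i hi), one_div]

lemma alternating_sum_esymm_inv_div_prod_one_sub_inv {m : ℕ} (hx : ∀ i ∈ s, x i ≠ 0)
    (hm : m ≤ #s + 1) :
    (∑ q ∈ range m, (-1) ^ q * ∑ t ∈ powersetCard (#s - q) s, ∏ i ∈ t, (x i)⁻¹) /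
        ∏ i ∈ s, (1 - (x i)⁻¹) =
      (-1) ^ #s * (∑ q ∈ range m, (-1) ^ q * ∑ t ∈ powersetCard q s, ∏ i ∈ t, x i) /
        ∏ i ∈ s, (1 - x i) := by
  have numerator_eq :
      ∑ q ∈ range m, (-1) ^ q * ∑ t ∈ powersetCard (#s - q) s, ∏ i ∈ t, (x i)⁻¹ =
        (∑ q ∈ range m, (-1) ^ q * ∑ t ∈ powersetCard q s, ∏ i ∈ t, x i) / ∏ i ∈ s, x i := by
    rw [sum_div]
    refine sum_congr rfl fun q hq => ?_
    have hqs : q ≤ #s := Nat.le_of_lt_succ ((mem_range.mp hq).trans_le hm)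
    rw [sum_powersetCard_card_sub_prod_inv hx hqs, mul_div_assoc]
  rw [numerator_eq, prod_one_sub_inv hx, div_div_div_cancel_right₀ (prod_ne_zero_iff.mpr hx),
    div_mul_eq_div_div, div_eq_mul_inv _ ((-1) ^ #s), ← inv_pow, inv_neg_one, mul_comm (_ ^ #s)]

end Field

/-- inversion behaviour of the absolute coexact generating function:
`g_a(p, σ⁻¹) = (-1)^(p+1) σ^(p+1) [Σ_{q=0}^{d-1-p} (-1)^q e_q(σ^{d_1},…,σ^{d_d})] / ∏ (1-σ^{d_i})`. -/
theorem absolute_generating_function_inversion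
    (d : ℕ) (hd : 1 ≤ d) (dd : Fin d → ℕ) (hdd : ∀ i, 0 < dd i)
    (K : Type*) [Field K] (σ : K) (hσ : σ ≠ 0)
    (hσd : ∀ i, σ ^ dd i ≠ 1) (p : ℕ) (hp : p ≤ d - 1) :
    (-1 : K) ^ (d + 1 + p) *
        (∑ q ∈ range (d - p), (-1 : K) ^ q *
          ∑ t ∈ powersetCard (d - q) (univ : Finset (Fin d)), ∏ i ∈ t, σ⁻¹ ^ dd i) /
      (σ⁻¹ ^ (p + 1) * ∏ i, (1 - σ⁻¹ ^ dd i)) =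
    (-1 : K) ^ (p + 1) * σ ^ (p + 1) *
        (∑ q ∈ range (d - p), (-1 : K) ^ q *
          ∑ t ∈ powersetCard q (univ : Finset (Fin d)), ∏ i ∈ t, σ ^ dd i) /
      ∏ i, (1 - σ ^ dd i) := by
  have inversion := alternating_sum_esymm_inv_div_prod_one_sub_inv (s := univ)
    (x := fun i => σ ^ dd i) (m := d - p) (fun i _ => pow_ne_zero (dd i) hσ)
    (by rw [card_fin]; omega)
  rw [card_fin] at inversion
  have sign_eq : (-1 : K) ^ (d + 1 + p) * (-1) ^ d = (-1) ^ (p + 1) := by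
    rw [add_assoc, add_comm 1 p, pow_add, mul_right_comm, ← mul_pow, neg_one_mul, neg_neg,
      one_pow, one_mul]
  simp only [inv_pow]
  rw [mul_div_mul_comm, inversion, div_inv_eq_mul, ← sign_eq]
  ring
end

section
/- Let d ≥ 1 be an integer, let d_1,…,d_d be positive integers, let K be a field and let σ ∈ K satisfy σ ≠ 0 and σ^{d_i} ≠ 1 for all i. Then for every 0 ≤ p ≤ d−1 the following duality relation between absolute and relative coexact generating functions holds: g_a(p, σ^{−1}) − (−1)^d σ^{d+1} · g_r(p, σ) = (−1)^{p+1} σ^{p+1}. -/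
open Finset

/-!
Inverting every variable reverses the elementary symmetric polynomials:
`e_{d-q}(x⁻¹) ∏ xᵢ = e_q(x)`. Hence the numerator of `g_a(p, σ⁻¹)` is, up to the factor `∏ xᵢ`, the
alternating sum of `e_0, …, e_{d-1-p}` at `x = (σ^{d_1}, …, σ^{d_d})`, whereas the numerator of
`g_r(p, σ)` is, up to sign, the alternating sum of the remaining `e_{d-p}, …, e_d`. Together they
make up `∏ (1 - xᵢ)`, which cancels the common denominator.
-/

section ElementarySymmetric

variable {ι : Type*} [Fintype ι]

theorem esymm_map_inv_mul_prod {K : Type*} [Semifield K] {x : ι → K} (hx : ∀ i, x i ≠ 0)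
    {q : ℕ} (hq : q ≤ Fintype.card ι) :
    (univ.val.map x⁻¹).esymm (Fintype.card ι - q) * ∏ i, x i = (univ.val.map x).esymm q := by
  classical
  have compl_mem {a b : ℕ} (hab : a + b = Fintype.card ι) {t : Finset ι}
      (ht : t ∈ powersetCard a univ) : tᶜ ∈ powersetCard b univ := by
    rw [mem_powersetCard_univ] at ht ⊢
    rw [card_compl]
    omega
  have prod_inv_mul (t : Finset ι) : (∏ i ∈ t, x⁻¹ i) * ∏ i, x i = ∏ i ∈ tᶜ, x i := by
    simp only [Pi.inv_apply, prod_inv_distrib]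
    rw [← prod_mul_prod_compl t x, inv_mul_cancel_left₀ (prod_ne_zero_iff.mpr fun i _ ↦ hx i)]
  rw [esymm_map_val, esymm_map_val, sum_mul]
  exact sum_nbij' compl compl (fun _ ↦ compl_mem (by omega)) (fun _ ↦ compl_mem (by omega))
    (fun t _ ↦ compl_compl t) (fun t _ ↦ compl_compl t) fun t _ ↦ prod_inv_mul t

theorem prod_one_sub_eq_sum_esymm {R : Type*} [CommRing R] (x : ι → R) :
    ∏ i, (1 - x i) =
      ∑ q ∈ range (Fintype.card ι + 1), (-1) ^ q * (univ.val.map x).esymm q := by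
  simpa [Polynomial.eval_prod, Polynomial.eval_finsetSum] using
    congrArg (Polynomial.eval 1) (univ.val.map x).prod_X_sub_X_eq_sum_esymm

theorem prod_one_sub_inv_mul_prod {K : Type*} [Field K] {x : ι → K} (hx : ∀ i, x i ≠ 0) :
    (∏ i, (1 - x⁻¹ i)) * ∏ i, x i = (-1) ^ Fintype.card ι * ∏ i, (1 - x i) := by
  rw [← prod_mul_distrib, ← card_univ, ← prod_neg]
  exact prod_congr rfl fun i _ ↦ by rw [Pi.inv_apply, sub_mul, inv_mul_cancel₀ (hx i)]; ring

/-- The alternating sum `e_d - e_{d-1} + ⋯` of the `n` elementary symmetric polynomials of highest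
degree in the `d` variables `x`; the numerators of both coexact generating functions have this form.
For `n > d + 1` the truncated subtraction repeats `e_0`. -/
def alternatingTopEsymm {R : Type*} [CommRing R] (x : ι → R) (n : ℕ) : R :=
  ∑ q ∈ range n, (-1) ^ q * (univ.val.map x).esymm (Fintype.card ι - q)

theorem alternatingTopEsymm_inv_mul_prod {K : Type*} [Field K] {x : ι → K} (hx : ∀ i, x i ≠ 0)
    {n : ℕ} (hn : n ≤ Fintype.card ι + 1) :
    alternatingTopEsymm x⁻¹ n * ∏ i, x i =
      ∑ q ∈ range n, (-1) ^ q * (univ.val.map x).esymm q := by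
  rw [alternatingTopEsymm, sum_mul]
  refine sum_congr rfl fun q hq ↦ ?_
  have hq_lt := mem_range.mp hq
  rw [mul_assoc, esymm_map_inv_mul_prod hx (by omega)]

theorem neg_one_pow_card_mul_alternatingTopEsymm {R : Type*} [CommRing R] (x : ι → R) {m n : ℕ}
    (hmn : m + n = Fintype.card ι + 1) :
    (-1) ^ Fintype.card ι * alternatingTopEsymm x n =
      ∑ q ∈ range n, (-1) ^ (m + q) * (univ.val.map x).esymm (m + q) := by
  rw [alternatingTopEsymm, mul_sum, ← sum_range_reflect]
  refine sum_congr rfl fun q hq ↦ ?_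
  have hq_lt := mem_range.mp hq
  have degree_eq : Fintype.card ι - (n - 1 - q) = m + q := by omega
  have sign_eq : (-1 : R) ^ (Fintype.card ι + (n - 1 - q)) = (-1) ^ (m + q) :=
    neg_one_pow_congr (by grind)
  rw [degree_eq, ← mul_assoc, ← pow_add, sign_eq]

theorem alternatingTopEsymm_inv_add {K : Type*} [Field K] {x : ι → K} (hx : ∀ i, x i ≠ 0)
    {m n : ℕ} (hmn : m + n = Fintype.card ι + 1) :
    alternatingTopEsymm x⁻¹ m * ∏ i, x i + (-1) ^ Fintype.card ι * alternatingTopEsymm x n =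
      ∏ i, (1 - x i) := by
  rw [alternatingTopEsymm_inv_mul_prod hx (by omega),
    neg_one_pow_card_mul_alternatingTopEsymm x hmn, prod_one_sub_eq_sum_esymm, ← hmn,
    sum_range_add]

end ElementarySymmetric

section CoexactGenerating

variable {ι : Type*} [Fintype ι] {K : Type*} [Field K]

/-- The absolute coexact `p`-form generating function `g_a(p, σ)`, with independent variables `x i`
in place of the powers `σ ^ dᵢ`. -/
def absoluteCoexact (x : ι → K) (σ : K) (p : ℕ) : K :=
  (-1) ^ (Fintype.card ι + 1 + p) * alternatingTopEsymm x (Fintype.card ι - p) /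
    (σ ^ (p + 1) * ∏ i, (1 - x i))

/-- The relative coexact `p`-form generating function `g_r(p, σ)`, with independent variables `x i`
in place of the powers `σ ^ dᵢ`. -/
def relativeCoexact (x : ι → K) (σ : K) (p : ℕ) : K :=
  (-1) ^ p * alternatingTopEsymm x (p + 1) /
    (σ ^ (Fintype.card ι - p) * ∏ i, (1 - x i))

theorem absoluteCoexact_inv {x : ι → K} (hx : ∀ i, x i ≠ 0) (σ : K) (p : ℕ) :
    absoluteCoexact x⁻¹ σ⁻¹ p =
      (-1) ^ (p + 1) * σ ^ (p + 1) *
        (alternatingTopEsymm x⁻¹ (Fintype.card ι - p) * ∏ i, x i) / ∏ i, (1 - x i) := by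
  have variables_prod_ne_zero : ∏ i, x i ≠ 0 := prod_ne_zero_iff.mpr fun i _ ↦ hx i
  rw [absoluteCoexact, eq_div_of_mul_eq variables_prod_ne_zero (prod_one_sub_inv_mul_prod hx),
    add_right_comm, add_assoc, pow_add, inv_pow]
  field_simp

theorem pow_card_succ_mul_relativeCoexact (x : ι → K) {σ : K} (hσ : σ ≠ 0) {p : ℕ}
    (hp : p ≤ Fintype.card ι) :
    σ ^ (Fintype.card ι + 1) * relativeCoexact x σ p =
      (-1) ^ p * σ ^ (p + 1) * alternatingTopEsymm x (p + 1) / ∏ i, (1 - x i) := by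
  have pow_split : σ ^ (Fintype.card ι + 1) = σ ^ (Fintype.card ι - p) * σ ^ (p + 1) := by
    rw [← pow_add]
    congr 1
    omega
  rw [relativeCoexact, pow_split]
  field_simp

theorem absolute_relative_duality_general {x : ι → K} (hx : ∀ i, x i ≠ 0) (hx_one : ∀ i, x i ≠ 1)
    {σ : K} (hσ : σ ≠ 0) {p : ℕ} (hp : p ≤ Fintype.card ι) :
    absoluteCoexact x⁻¹ σ⁻¹ p -
        (-1) ^ Fintype.card ι * σ ^ (Fintype.card ι + 1) * relativeCoexact x σ p =
      (-1) ^ (p + 1) * σ ^ (p + 1) := by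
  have denominator_ne_zero : ∏ i, (1 - x i) ≠ 0 :=
    prod_ne_zero_iff.mpr fun i _ ↦ sub_ne_zero.mpr (hx_one i).symm
  have numerators_add := alternatingTopEsymm_inv_add hx
    (show Fintype.card ι - p + (p + 1) = Fintype.card ι + 1 by omega)
  rw [mul_assoc _ (σ ^ _), absoluteCoexact_inv hx, pow_card_succ_mul_relativeCoexact x hσ hp,
    ← mul_div_assoc, ← sub_div, div_eq_iff denominator_ne_zero, ← numerators_add]
  ring

end CoexactGenerating

/-- the duality relation
`g_a(p, σ⁻¹) − (−1)^d σ^(d+1) g_r(p, σ) = (−1)^(p+1) σ^(p+1)`. -/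
theorem absolute_relative_duality
    (d : ℕ) (hd : 1 ≤ d) (dd : Fin d → ℕ) (hdd : ∀ i, 0 < dd i)
    (K : Type*) [Field K] (σ : K) (hσ : σ ≠ 0)
    (hσd : ∀ i, σ ^ dd i ≠ 1) (p : ℕ) (hp : p ≤ d - 1) :
    (-1 : K) ^ (d + 1 + p) *
        (∑ q ∈ range (d - p), (-1 : K) ^ q *
          ∑ t ∈ powersetCard (d - q) (univ : Finset (Fin d)), ∏ i ∈ t, σ⁻¹ ^ dd i) /
      (σ⁻¹ ^ (p + 1) * ∏ i, (1 - σ⁻¹ ^ dd i)) -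
    (-1 : K) ^ d * σ ^ (d + 1) *
      ((-1 : K) ^ p *
          (∑ q ∈ range (p + 1), (-1 : K) ^ q *
            ∑ t ∈ powersetCard (d - q) (univ : Finset (Fin d)), ∏ i ∈ t, σ ^ dd i) /
        (σ ^ (d - p) * ∏ i, (1 - σ ^ dd i))) =
    (-1 : K) ^ (p + 1) * σ ^ (p + 1) := by
  simpa only [absoluteCoexact, relativeCoexact, alternatingTopEsymm, esymm_map_val, Pi.inv_apply,
    inv_pow, Fintype.card_fin] using
    absolute_relative_duality_general (fun i ↦ pow_ne_zero (dd i) hσ) hσd hσ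
      (p := p) (by rw [Fintype.card_fin]; omega)
end

section
/- Let d ≥ 1 be an odd integer, set p = (d−1)/2 (the middle form rank), let d_1,…,d_d be positive integers, let K be a field and let σ ∈ K satisfy σ ≠ 0 and σ^{d_i} ≠ 1 for all i. Then the middle-rank coexact generating function is self-dual, g_a(p,σ) = g_r(p,σ), and its symmetrised cylinder-kernel combination is constant: g_a(p, σ^{−1}) + σ^{d+1} · g_a(p, σ) = (−1)^{p+1} σ^{p+1}. -/
open Finset

/-!
Write `x` for the family `σ ^ dᵢ` and `D = ∏ (1 - xᵢ) = ∑ (-1)^k eₖ(x)`. Inverting the variables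
reverses the elementary symmetric functions, `e_{d-q}(x⁻¹) = e_q(x) / ∏ xᵢ`, so the top alternating
sum in the numerator of `g_a(p, σ⁻¹)` becomes a bottom partial sum of the expansion of `D`. What is
missing from `D` is, up to sign, the numerator of `g_r(p, σ)`. This gives
`g_a(p, σ⁻¹) + (-σ)^(d+1) g_r(p, σ) = (-σ)^(p+1)` in every rank, while `g_a(p, σ) = g_r(d-1-p, σ)`
amounts to comparing signs; `p` is its own dual rank exactly when `d = 2p + 1`.
-/

section ElementarySymmetric

variable {R K : Type*} [CommRing R] [Field K]

theorem prod_one_sub_eq_sum_esymm_s5 (m : Multiset R) :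
    (m.map fun a => 1 - a).prod = ∑ k ∈ range (m.card + 1), (-1) ^ k * m.esymm k := by
  simpa [Polynomial.eval_multiset_prod, Polynomial.eval_finsetSum] using
    congrArg (Polynomial.eval 1) m.prod_X_sub_X_eq_sum_esymm

theorem esymm_map_inv_mul_prod_s5 {m : Multiset K} (hm : 0 ∉ m) {k l : ℕ} (hkl : k + l = m.card) :
    (m.map fun a => a⁻¹).esymm k * m.prod = m.esymm l := by
  classical
  obtain ⟨ι, _, x, rfl⟩ : ∃ (ι : Type _) (_ : Fintype ι) (x : ι → K), univ.val.map x = m :=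
    ⟨m, inferInstance, fun a => a, m.map_univ_coe⟩
  have hx : ∀ i, x i ≠ 0 := fun i hi => hm (Multiset.mem_map.2 ⟨i, mem_univ i, hi⟩)
  have hcard : k + l = Fintype.card ι := by simpa using hkl
  rw [Multiset.map_map, esymm_map_val, esymm_map_val, sum_mul]
  have hcompl : ∀ {a b : ℕ}, a + b = Fintype.card ι →
      ∀ t ∈ powersetCard a (univ : Finset ι), tᶜ ∈ powersetCard b univ := fun hab t ht => by
    rw [mem_powersetCard_univ] at ht ⊢
    rw [card_compl]
    lia
  refine sum_nbij' compl compl (hcompl hcard) (hcompl (by lia)) (fun t _ => compl_compl t)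
    (fun t _ => compl_compl t) fun t _ => ?_
  have ht : ∏ i ∈ t, x i ≠ 0 := prod_ne_zero_iff.2 fun i _ => hx i
  calc (∏ i ∈ t, (x i)⁻¹) * ∏ i, x i
      = (∏ i ∈ t, x i)⁻¹ * ((∏ i ∈ t, x i) * ∏ i ∈ tᶜ, x i) := by
        rw [prod_inv_distrib, prod_mul_prod_compl]
    _ = ∏ i ∈ tᶜ, x i := inv_mul_cancel_left₀ ht _

theorem prod_one_sub_inv_mul_prod_s5 {m : Multiset K} (hm : 0 ∉ m) :
    (m.map fun a => 1 - a⁻¹).prod * m.prod = (-1) ^ m.card * (m.map fun a => 1 - a).prod := by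
  have hfactor : ∀ a ∈ m, (1 - a⁻¹) * a = -1 * (1 - a) := fun a ha => by
    rw [sub_mul, inv_mul_cancel₀ (ne_of_mem_of_not_mem ha hm)]
    ring
  calc (m.map fun a => 1 - a⁻¹).prod * m.prod
      = (m.map fun a => (1 - a⁻¹) * a).prod := by rw [Multiset.prod_map_mul, Multiset.map_id']
    _ = (m.map fun a => -1 * (1 - a)).prod := by rw [Multiset.map_congr rfl hfactor]
    _ = (-1) ^ m.card * (m.map fun a => 1 - a).prod := by
        rw [Multiset.prod_map_mul, Multiset.map_const', Multiset.prod_replicate]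

/-- The alternating sum `e_d - e_{d-1} + ⋯` of the top `n` elementary symmetric functions of a
multiset of size `d`, the common shape of the numerators of both generating functions. It is only
meaningful for `n ≤ d + 1`: beyond that, truncated subtraction repeats the term `e_0`. -/
def topAltEsymm (m : Multiset R) (n : ℕ) : R :=
  ∑ q ∈ range n, (-1) ^ q * m.esymm (m.card - q)

theorem sum_esymm_add_topAltEsymm (m : Multiset R) {n r : ℕ} (h : n + r = m.card + 1) :
    ∑ k ∈ range n, (-1) ^ k * m.esymm k + (-1) ^ m.card * topAltEsymm m r =
      (m.map fun a => 1 - a).prod := by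
  rw [prod_one_sub_eq_sum_esymm_s5, ← h, sum_range_add, topAltEsymm, mul_sum,
    ← sum_range_reflect (fun j => (-1) ^ (n + j) * m.esymm (n + j))]
  congr 1
  refine sum_congr rfl fun q hq => ?_
  have hqr : q < r := mem_range.1 hq
  have hindex : n + (r - 1 - q) = m.card - q := by lia
  have hsign : (-1 : R) ^ m.card * (-1) ^ q = (-1) ^ (m.card - q) := by
    rw [← pow_add, show m.card + q = m.card - q + 2 * q by lia, pow_add, pow_mul, neg_one_sq,
      one_pow, mul_one]
  rw [hindex, ← mul_assoc, hsign]

theorem topAltEsymm_map_inv_mul_prod {m : Multiset K} (hm : 0 ∉ m) {n : ℕ}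
    (hn : n ≤ m.card + 1) :
    topAltEsymm (m.map fun a => a⁻¹) n * m.prod = ∑ k ∈ range n, (-1) ^ k * m.esymm k := by
  rw [topAltEsymm, Multiset.card_map, sum_mul]
  refine sum_congr rfl fun q hq => ?_
  have hqn : q < n := mem_range.1 hq
  rw [mul_assoc, esymm_map_inv_mul_prod_s5 hm (show m.card - q + q = m.card by lia)]

theorem topAltEsymm_map_inv_div {m : Multiset K} (h0 : 0 ∉ m) (h1 : 1 ∉ m) {n r : ℕ}
    (h : n + r = m.card + 1) :
    topAltEsymm (m.map fun a => a⁻¹) n / (m.map fun a => 1 - a⁻¹).prod =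
      (-1) ^ m.card - topAltEsymm m r / (m.map fun a => 1 - a).prod := by
  have hD : (m.map fun a => 1 - a).prod ≠ 0 := Multiset.prod_ne_zero <| by
    simpa [sub_eq_zero] using h1
  have hP : m.prod ≠ 0 := Multiset.prod_ne_zero h0
  have hsign : (-1 : K) ^ m.card * (-1) ^ m.card = 1 := by rw [← mul_pow]; simp
  have hsum := sum_esymm_add_topAltEsymm m h
  rw [← topAltEsymm_map_inv_mul_prod h0 (by lia : n ≤ m.card + 1)] at hsum
  rw [← mul_div_mul_right _ _ hP, prod_one_sub_inv_mul_prod_s5 h0, eq_sub_of_add_eq hsum]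
  field_simp
  linear_combination -(m.map fun a => 1 - a).prod * hsign

end ElementarySymmetric

section GeneratingFunctions

variable {K : Type*} [Field K]

/-- The absolute coexact `p`-form degeneracy generating function `g_a(p, σ)` for the multiset of
degrees `degs`, whose size is the dimension `d`. -/
def absCoexactGenFun (degs : Multiset ℕ) (p : ℕ) (σ : K) : K :=
  (-1) ^ (degs.card + 1 + p) * topAltEsymm (degs.map fun n => σ ^ n) (degs.card - p) /
    (σ ^ (p + 1) * (degs.map fun n => 1 - σ ^ n).prod)

/-- The relative coexact `p`-form degeneracy generating function `g_r(p, σ)` for the multiset of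
degrees `degs`, whose size is the dimension `d`. -/
def relCoexactGenFun (degs : Multiset ℕ) (p : ℕ) (σ : K) : K :=
  (-1) ^ p * topAltEsymm (degs.map fun n => σ ^ n) (p + 1) /
    (σ ^ (degs.card - p) * (degs.map fun n => 1 - σ ^ n).prod)

theorem absCoexactGenFun_eq_relCoexactGenFun {degs : Multiset ℕ} {p p' : ℕ}
    (h : p + p' + 1 = degs.card) (σ : K) :
    absCoexactGenFun degs p σ = relCoexactGenFun degs p' σ := by
  have hsign : (-1 : K) ^ (degs.card + 1 + p) = (-1) ^ p' := by
    rw [show degs.card + 1 + p = 2 * (p + 1) + p' by lia, pow_add, pow_mul, neg_one_sq, one_pow,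
      one_mul]
  rw [absCoexactGenFun, relCoexactGenFun, hsign, show degs.card - p = p' + 1 by lia,
    show degs.card - p' = p + 1 by lia]

theorem absCoexactGenFun_inv_add {degs : Multiset ℕ} {p : ℕ} (hp : p ≤ degs.card) {σ : K}
    (hσ : σ ≠ 0) (hdegs : ∀ n ∈ degs, σ ^ n ≠ 1) :
    absCoexactGenFun degs p σ⁻¹ + (-σ) ^ (degs.card + 1) * relCoexactGenFun degs p σ =
      (-σ) ^ (p + 1) := by
  obtain ⟨r, hr⟩ := Nat.exists_eq_add_of_le hp
  have hratio := topAltEsymm_map_inv_div (m := degs.map fun n => σ ^ n) (n := r) (r := p + 1)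
    (by simp [hσ]) (by simpa using hdegs) (by rw [Multiset.card_map]; lia)
  simp only [Multiset.map_map, Function.comp_def, Multiset.card_map, hr] at hratio
  have habs : absCoexactGenFun degs p σ⁻¹ = (-1) ^ (p + r + 1 + p) * σ ^ (p + 1) *
      ((-1) ^ (p + r) - topAltEsymm (degs.map fun n => σ ^ n) (p + 1) /
        (degs.map fun n => 1 - σ ^ n).prod) := by
    rw [← hratio, absCoexactGenFun, hr, Nat.add_sub_cancel_left]
    simp only [inv_pow]
    field_simp
  have hrel : σ ^ r * relCoexactGenFun degs p σ = (-1) ^ p *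
      (topAltEsymm (degs.map fun n => σ ^ n) (p + 1) / (degs.map fun n => 1 - σ ^ n).prod) := by
    rw [relCoexactGenFun, hr, Nat.add_sub_cancel_left]
    field_simp
  have hsign : (-1 : K) ^ (p + r) * (-1) ^ (p + r) = 1 := by rw [← mul_pow]; simp
  rw [habs, hr, neg_pow σ (p + r + 1), neg_pow σ (p + 1)]
  linear_combination (-1) ^ (p + r + 1) * σ ^ (p + 1) * hrel + (-1) ^ (p + 1) * σ ^ (p + 1) * hsign

theorem middle_rank_self_duality_general {degs : Multiset ℕ} {p p' : ℕ}
    (hpp' : p + p' + 1 = degs.card) {σ : K} (hσ : σ ≠ 0) (hdegs : ∀ n ∈ degs, σ ^ n ≠ 1) :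
    absCoexactGenFun degs p σ = relCoexactGenFun degs p' σ ∧
    absCoexactGenFun degs p σ⁻¹ + (-σ) ^ (degs.card + 1) * absCoexactGenFun degs p' σ =
      (-σ) ^ (p + 1) := by
  refine ⟨absCoexactGenFun_eq_relCoexactGenFun hpp' σ, ?_⟩
  rw [absCoexactGenFun_eq_relCoexactGenFun (show p' + p + 1 = degs.card by lia)]
  exact absCoexactGenFun_inv_add (by lia) hσ hdegs

end GeneratingFunctions

/-- for odd `d = 2p+1` (middle form rank `p = (d-1)/2`) the coexact
generating function is self-dual, `g_a(p,σ) = g_r(p,σ)`, and satisfies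
`g_a(p,σ⁻¹) + σ^(d+1) g_a(p,σ) = (−1)^(p+1) σ^(p+1)`. -/
theorem middle_rank_self_duality
    (d : ℕ) (hd : 1 ≤ d) (hodd : Odd d) (p : ℕ) (hp : d = 2 * p + 1)
    (dd : Fin d → ℕ) (hdd : ∀ i, 0 < dd i)
    (K : Type*) [Field K] (σ : K) (hσ : σ ≠ 0) (hσd : ∀ i, σ ^ dd i ≠ 1) :
    ((-1 : K) ^ (d + 1 + p) *
        (∑ q ∈ range (d - p), (-1 : K) ^ q *
          ∑ t ∈ powersetCard (d - q) (univ : Finset (Fin d)), ∏ i ∈ t, σ ^ dd i) /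
      (σ ^ (p + 1) * ∏ i, (1 - σ ^ dd i)) =
      (-1 : K) ^ p *
        (∑ q ∈ range (p + 1), (-1 : K) ^ q *
          ∑ t ∈ powersetCard (d - q) (univ : Finset (Fin d)), ∏ i ∈ t, σ ^ dd i) /
      (σ ^ (d - p) * ∏ i, (1 - σ ^ dd i))) ∧
    ((-1 : K) ^ (d + 1 + p) *
        (∑ q ∈ range (d - p), (-1 : K) ^ q *
          ∑ t ∈ powersetCard (d - q) (univ : Finset (Fin d)), ∏ i ∈ t, σ⁻¹ ^ dd i) /
      (σ⁻¹ ^ (p + 1) * ∏ i, (1 - σ⁻¹ ^ dd i)) +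
      σ ^ (d + 1) *
        ((-1 : K) ^ (d + 1 + p) *
            (∑ q ∈ range (d - p), (-1 : K) ^ q *
              ∑ t ∈ powersetCard (d - q) (univ : Finset (Fin d)), ∏ i ∈ t, σ ^ dd i) /
          (σ ^ (p + 1) * ∏ i, (1 - σ ^ dd i))) =
      (-1 : K) ^ (p + 1) * σ ^ (p + 1)) := by
  have hcard : (univ.val.map dd).card = d := by simp
  have hdual := middle_rank_self_duality_general (degs := univ.val.map dd) (p := p) (p' := p)
    (by lia) hσ (by simpa using hσd)
  simpa only [absCoexactGenFun, relCoexactGenFun, topAltEsymm, Multiset.map_map, Function.comp_def,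
    esymm_map_val, prod_map_val, Multiset.card_map, card_val, card_fin, hodd.add_one.neg_pow,
    neg_pow σ (p + 1)] using hdual
end

section
/- Let p ≥ 0 be an integer, set d = 2p+1, and let d_1,…,d_d be positive integers. Let g : ℕ → ℤ be the sequence of coefficients of the formal power series (−1)^{p}·[ Σ_{q=0}^{p} (−1)^q e_{d−q}(X^{d_1},…,X^{d_d}) ] · X^{−(p+1)} · ∏_{i=1}^d (1−X^{d_i})^{−1} in ℤ[[X]] (this is a well-defined power series because every monomial of the numerator has degree at least p+1). Then there exists a function F : ℂ → ℂ such that: (i) F is complex-differentiable at every point of ℂ except possibly the half-odd-integers 1/2, 3/2, …, p+1/2; (ii) for every s ∈ ℂ with Re s > d/2 the series Σ_{l=0}^∞ g(l)·(l+p+1)^{−2s} converges and equals F(s); (iii) F(0) = (−1)^{p+1}/2; and (iv) F(−k) = 0 for every integer k ≥ 1. (Consequently the heat-kernel expansion of the middle-rank coexact Laplacian on the fundamental domain of the tesselation of S^d terminates at the constant term, the constant term equals (−1)^{p+1}/2, and all boundary (half-integer) coefficients vanish.) -/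
open Finset

/-!
Let `a` be the two-sided coefficient sequence of the generating function times `X ^ (p + 1)`. The
involution `X ↦ X⁻¹` exchanges `e_q` with `e_{d-q}`, and for `d = 2p + 1` the product
`∏ (1 - X ^ d_i)` is the difference of the alternating sums of the `p + 1` lowest and highest
`e_q`. Hence `∏ (1 - X ^ d_i)` annihilates `b n = a n + a (-n) + (-1)^p δ_{n,0}`, so `b` is an even
quasi-polynomial. Its zeta function is `∑_j L(c_j, 2s - j)` with periodic coefficients `c_j` of
parity `(-1)^j`: odd `c_j` contribute no pole, the trivial zeros of these `L`-functions give the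
vanishing at negative integers, and at `s = 0` only `L(c_0, 0) = -b 0 / 2` survives.
-/

section AlternatingEsymm

variable {ι A B : Type*} [Fintype ι] [CommRing A] [CommRing B] {p : ℕ}

/-- The alternating sum `∑_{q ≤ p} (-1)^q e_q(x)` of the lowest elementary symmetric functions. -/
def altEsymmLow (p : ℕ) (x : ι → A) : A :=
  ∑ q ∈ range (p + 1), (-1) ^ q * ∑ t ∈ powersetCard q (univ : Finset ι), ∏ i ∈ t, x i

/-- The alternating sum `∑_{q ≤ p} (-1)^q e_{d-q}(x)` of the highest elementary symmetric functions
of `d = Fintype.card ι` variables; only `p ≤ d` is meaningful, as the subtraction is truncated. -/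
def altEsymmHigh (p : ℕ) (x : ι → A) : A :=
  ∑ q ∈ range (p + 1),
    (-1) ^ q * ∑ t ∈ powersetCard (Fintype.card ι - q) (univ : Finset ι), ∏ i ∈ t, x i

lemma map_altEsymmHigh (f : A →+* B) (p : ℕ) (x : ι → A) :
    f (altEsymmHigh p x) = altEsymmHigh p fun i ↦ f (x i) := by
  simp only [altEsymmHigh, map_sum, map_mul, map_pow, map_neg, map_one, map_prod]

lemma prod_one_sub_eq_altEsymmLow (x : ι → A) :
    ∏ i, (1 - x i) = altEsymmLow (Fintype.card ι) x := by
  simp_rw [sub_eq_add_neg, prod_one_add, sum_powerset, card_univ, altEsymmLow, mul_sum]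
  refine sum_congr rfl fun q _ ↦ sum_congr rfl fun t ht ↦ ?_
  rw [prod_neg, (mem_powersetCard.1 ht).2]

lemma prod_mul_esymm_of_mul_eq_one {x y : ι → A} (hxy : ∀ i, x i * y i = 1) {q : ℕ}
    (hq : q ≤ Fintype.card ι) :
    (∏ i, x i) * ∑ t ∈ powersetCard (Fintype.card ι - q) univ, ∏ i ∈ t, y i =
      ∑ t ∈ powersetCard q univ, ∏ i ∈ t, x i := by
  classical
  have hcompl (t : Finset ι) : (∏ i, x i) * ∏ i ∈ t, y i = ∏ i ∈ tᶜ, x i := by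
    rw [← prod_compl_mul_prod t, mul_assoc, ← prod_mul_distrib, prod_congr rfl fun i _ ↦ hxy i,
      prod_const_one, mul_one]
  rw [mul_sum]
  refine sum_nbij' compl compl ?_ ?_ (by simp) (by simp) fun t _ ↦ hcompl t <;>
  · intro t ht
    simp only [mem_powersetCard_univ, card_compl] at ht ⊢
    omega

lemma prod_mul_altEsymmHigh {x y : ι → A} (hxy : ∀ i, x i * y i = 1) (hp : p ≤ Fintype.card ι) :
    (∏ i, x i) * altEsymmHigh p y = altEsymmLow p x := by
  rw [altEsymmHigh, altEsymmLow, mul_sum]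
  refine sum_congr rfl fun q hq ↦ ?_
  have hqp : q < p + 1 := mem_range.1 hq
  rw [mul_left_comm, prod_mul_esymm_of_mul_eq_one hxy (by omega)]

lemma prod_mul_prod_one_sub {x y : ι → A} (hxy : ∀ i, x i * y i = 1) :
    (∏ i, x i) * ∏ i, (1 - y i) = (-1) ^ Fintype.card ι * ∏ i, (1 - x i) := by
  rw [← prod_mul_distrib, ← card_univ, ← prod_neg]
  exact prod_congr rfl fun i _ ↦ by linear_combination -hxy i

lemma neg_one_pow_sub_of_odd {d q : ℕ} (hd : Odd d) (hq : q ≤ d) :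
    (-1 : A) ^ (d - q) = -(-1) ^ q := by
  rcases Nat.even_or_odd q with he | ho
  · rw [(Nat.Odd.sub_even hq hd he).neg_one_pow, he.neg_one_pow]
  · rw [(Nat.Odd.sub_odd hd ho).neg_one_pow, ho.neg_one_pow, neg_neg]

lemma prod_one_sub_eq_altEsymmLow_sub_altEsymmHigh (hcard : Fintype.card ι = 2 * p + 1)
    (x : ι → A) : ∏ i, (1 - x i) = altEsymmLow p x - altEsymmHigh p x := by
  rw [prod_one_sub_eq_altEsymmLow, altEsymmLow, show Fintype.card ι + 1 = p + 1 + (p + 1) by omega,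
    sum_range_add, sub_eq_add_neg, altEsymmHigh, ← sum_neg_distrib]
  congr 1
  rw [← sum_range_reflect]
  refine sum_congr rfl fun q hq ↦ ?_
  have hqp : q < p + 1 := mem_range.1 hq
  rw [show p + 1 + (p + 1 - 1 - q) = Fintype.card ι - q by omega,
    neg_one_pow_sub_of_odd ⟨p, hcard⟩ (by omega), neg_mul]

end AlternatingEsymm

section ShiftAction

open LaurentPolynomial HahnSeries

variable {R : Type*} [CommRing R]

/-- Laurent polynomials acting on two-sided sequences by convolution: `T a` translates by `a`. -/
noncomputable def shiftAction : R[T;T⁻¹] →ₐ[R] Module.End R (ℤ → R) :=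
  AddMonoidAlgebra.lift R (Module.End R (ℤ → R)) ℤ
    { toFun a := LinearMap.funLeft R R (· - a.toAdd)
      map_one' := by ext; simp
      map_mul' a b := by
        ext f n
        simp only [LinearMap.funLeft_apply, toAdd_mul, Module.End.mul_apply]
        rw [sub_sub] }

lemma shiftAction_T (a : ℤ) (f : ℤ → R) (n : ℤ) : shiftAction (T a) f n = f (n - a) := by
  rw [shiftAction, T, AddMonoidAlgebra.lift_single, one_smul]
  rfl

lemma shiftAction_C_mul_T (r : R) (a : ℤ) (f : ℤ → R) (n : ℤ) :
    shiftAction (C r * T a) f n = r * f (n - a) := by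
  rw [← smul_eq_C_mul, map_smul, LinearMap.smul_apply, Pi.smul_apply, shiftAction_T, smul_eq_mul]

lemma shiftAction_invert_comp_neg (q : R[T;T⁻¹]) (f : ℤ → R) :
    shiftAction (invert q) (f ∘ Neg.neg) = shiftAction q f ∘ Neg.neg := by
  induction q using LaurentPolynomial.induction_on' with
  | add q r hq hr =>
    simp only [map_add, LinearMap.add_apply, hq, hr]
    rfl
  | C_mul_T a r =>
    ext n
    rw [map_mul, invert_C, invert_T, shiftAction_C_mul_T, Function.comp_apply, Function.comp_apply,
      shiftAction_C_mul_T, neg_sub_left, sub_neg_eq_add, add_comm]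

lemma shiftAction_toLaurent_coeff (q : Polynomial R) (φ : PowerSeries R) :
    shiftAction q.toLaurent (ofPowerSeries ℤ R φ).coeff = (ofPowerSeries ℤ R (q * φ)).coeff := by
  induction q using Polynomial.induction_on' with
  | add q r hq hr =>
    simp only [map_add, LinearMap.add_apply, hq, hr, Polynomial.coe_add, add_mul]
    rfl
  | monomial a r =>
    ext n
    rw [← Polynomial.C_mul_X_pow_eq_monomial, Polynomial.toLaurent_C_mul_X_pow, shiftAction_C_mul_T]
    simp only [Polynomial.coe_mul, Polynomial.coe_C, Polynomial.coe_pow, Polynomial.coe_X, map_mul,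
      mul_assoc, ofPowerSeries_X_pow, ofPowerSeries_C, HahnSeries.C_apply,
      coeff_single_mul, one_mul, sub_zero]

/-- The even sequence obtained by adding to `a` its reflection `n ↦ a (-n)`, and `ε` at `0`. -/
def symmetrization (ε : R) (a : ℤ → R) : ℤ → R :=
  a + a ∘ Neg.neg + ε • Pi.single 0 1

lemma even_symmetrization (ε : R) (a : ℤ → R) : (symmetrization ε a).Even := by
  intro n
  simp [symmetrization, Pi.single_apply, add_comm (a n)]

lemma symmetrization_coeff_zero (ε : R) {φ : PowerSeries R} (hφ : PowerSeries.coeff 0 φ = 0) :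
    symmetrization ε (ofPowerSeries ℤ R φ).coeff 0 = ε := by
  have h : (ofPowerSeries ℤ R φ).coeff 0 = 0 := by
    simpa [hφ] using LaurentSeries.coeff_coe_powerSeries φ 0
  simp [symmetrization, h]

lemma symmetrization_coeff_natCast (ε : R) (φ : PowerSeries R) {n : ℕ} (hn : n ≠ 0) :
    symmetrization ε (ofPowerSeries ℤ R φ).coeff n = PowerSeries.coeff n φ := by
  simp [symmetrization, hn, PowerSeries.coeff_coe, Nat.pos_of_ne_zero hn]

lemma shiftAction_symmetrization_eq_zero {ι : Type*} [Fintype ι] {p : ℕ} {ε : R}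
    (hcard : Fintype.card ι = 2 * p + 1) (e : ι → ℤ) {a : ℤ → R}
    (ha : shiftAction (∏ i, (1 - T (e i))) a =
      ε • shiftAction (altEsymmHigh p fun i ↦ T (e i)) (Pi.single 0 1)) :
    shiftAction (∏ i, (1 - T (e i))) (symmetrization ε a) = 0 := by
  set P : R[T;T⁻¹] := ∏ i, (1 - T (e i))
  set H : R[T;T⁻¹] := altEsymmHigh p fun i ↦ T (e i)
  set L : R[T;T⁻¹] := altEsymmLow p fun i ↦ T (e i)
  set M : R[T;T⁻¹] := ∏ i, T (e i)
  set δ : ℤ → R := Pi.single 0 1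
  have hδ : δ ∘ Neg.neg = δ := by ext n; simp [δ, Pi.single_apply]
  have hT (i) : T (e i) * T (-e i) = (1 : R[T;T⁻¹]) := by rw [← T_add, add_neg_cancel, T_zero]
  have hP : P = -(M * invert P) := by
    simp [P, M, prod_mul_prod_one_sub hT, hcard, pow_succ]
  have hL : M * invert H = L := by
    have hinv : invert H = altEsymmHigh p fun i ↦ T (-e i) := by
      simpa using map_altEsymmHigh (invert (R := R)).toRingHom p fun i ↦ T (e i)
    rw [hinv, prod_mul_altEsymmHigh hT (by omega)]
  have hrefl : shiftAction P (a ∘ Neg.neg) = -(ε • shiftAction L δ) := calc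
    _ = -shiftAction M (shiftAction P a ∘ Neg.neg) := by
      conv_lhs => rw [hP, map_neg, map_mul]
      rw [LinearMap.neg_apply, Module.End.mul_apply, shiftAction_invert_comp_neg]
    _ = -shiftAction M (ε • (shiftAction H δ ∘ Neg.neg)) := by rw [ha]; rfl
    _ = _ := by
      rw [← shiftAction_invert_comp_neg, hδ, map_smul, ← Module.End.mul_apply, ← map_mul, hL]
  have hPLH : P = L - H := prod_one_sub_eq_altEsymmLow_sub_altEsymmHigh hcard _
  rw [symmetrization, map_add, map_add, map_smul, ha, hrefl, hPLH, map_sub, LinearMap.sub_apply,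
    smul_sub]
  abel

lemma shiftAction_symmetrization_coeff_eq_zero {ι : Type*} [Fintype ι] {p : ℕ} {ε : R}
    (hcard : Fintype.card ι = 2 * p + 1) (e : ι → ℕ) {φ : PowerSeries R}
    (hφ : φ * ∏ i, (1 - PowerSeries.X ^ e i) =
      PowerSeries.C ε * altEsymmHigh p fun i ↦ PowerSeries.X ^ e i) :
    shiftAction (∏ i, (1 - T (e i)))
      (symmetrization ε (ofPowerSeries ℤ R φ).coeff) = 0 := by
  have hδ : (ofPowerSeries ℤ R 1).coeff = Pi.single 0 1 := by
    ext n; simp [Pi.single_apply]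
  set P : Polynomial R := ∏ i, (1 - Polynomial.X ^ e i)
  set H : Polynomial R := altEsymmHigh p fun i ↦ Polynomial.X ^ e i
  have hpoly : (P : PowerSeries R) * φ = (Polynomial.C ε * H : Polynomial R) * 1 := by
    simp only [P, H, ← Polynomial.coeToPowerSeries.ringHom_apply, map_mul, map_prod,
      map_altEsymmHigh, map_pow, map_one, map_sub]
    simpa [mul_comm] using hφ
  have hact := shiftAction_toLaurent_coeff P φ
  rw [hpoly, ← shiftAction_toLaurent_coeff, hδ] at hact
  refine shiftAction_symmetrization_eq_zero hcard (fun i ↦ e i) ?_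
  simpa [P, H, map_altEsymmHigh, ← smul_eq_C_mul] using hact

lemma prod_one_sub_T_dvd_one_sub_T_prod_pow {ι : Type*} [Fintype ι] (e : ι → ℕ) :
    ∏ i, (1 - T (e i) : R[T;T⁻¹]) ∣ (1 - T (∏ i, e i : ℕ)) ^ Fintype.card ι := by
  rw [← card_univ, ← prod_const]
  refine prod_dvd_prod_of_dvd _ _ fun i hi ↦ ?_
  obtain ⟨m, hm⟩ := dvd_prod_of_mem e hi
  rw [hm, mul_comm, Nat.cast_mul, ← T_pow]
  simpa only [one_pow] using sub_dvd_pow_sub_pow 1 (T (e i) : R[T;T⁻¹]) m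

end ShiftAction

section QuasiPolynomial

open Polynomial

variable {R : Type*} [CommRing R] {d N : ℕ}

lemma comp_mem_degreeLT {P L : R[X]} (hP : P ∈ degreeLT R d) (hL : L.natDegree ≤ 1) :
    P.comp L ∈ degreeLT R d := by
  rcases eq_or_ne P 0 with rfl | hP0
  · rw [zero_comp]
    exact zero_mem _
  · have hPd : P.natDegree < d := (natDegree_lt_iff_degree_lt hP0).2 (mem_degreeLT.1 hP)
    have hcomp : (P.comp L).natDegree ≤ P.natDegree * 1 :=
      natDegree_comp_le.trans (Nat.mul_le_mul_left _ hL)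
    exact mem_degreeLT.2 (degree_le_natDegree.trans_lt (by exact_mod_cast (by omega)))

lemma eval_eq_sum_range_of_mem_degreeLT {P : R[X]} (hP : P ∈ degreeLT R d) (x : R) :
    P.eval x = ∑ j ∈ range d, P.coeff j * x ^ j := by
  rw [eval_eq_sum, sum_eq_of_subset _ fun j ↦ zero_mul _]
  intro j hj
  rw [mem_range]
  by_contra! hdj
  exact mem_support_iff.1 hj (coeff_eq_zero_of_degree_lt
    ((mem_degreeLT.1 hP).trans_le (by exact_mod_cast hdj)))

lemma periodic_eq_apply_zmod_val [NeZero N] {α : Type*} {f : ℤ → α}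
    (hf : Function.Periodic f N) (n : ℤ) : f n = f (n : ZMod N).val := by
  rw [ZMod.val_intCast, Int.emod_def, mul_comm, ← smul_eq_mul, hf.sub_zsmul_eq]

/-- The quasi-polynomial `n ↦ Q_n(n)` with constituents `Q_r`, `r ∈ ZMod N`, is even
constituentwise: `Q_{-r}(x) = Q_r(-x)` as polynomials. -/
def IsEvenQuasiPolynomial (Q : ZMod N → R[X]) : Prop :=
  ∀ r, Q (-r) = (Q r).comp (-X)

namespace IsEvenQuasiPolynomial

variable {Q : ZMod N → R[X]}

lemma coeff_neg (hQ : IsEvenQuasiPolynomial Q) (r : ZMod N) (j : ℕ) :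
    (Q (-r)).coeff j = (-1) ^ j * (Q r).coeff j := by
  rw [hQ, show (-X : R[X]) = C (-1) * X by simp, comp_C_mul_X_coeff, mul_comm]

lemma even_coeff (hQ : IsEvenQuasiPolynomial Q) {j : ℕ} (hj : Even j) :
    Function.Even fun r ↦ (Q r).coeff j := by
  intro r
  beta_reduce
  rw [hQ.coeff_neg, hj.neg_one_pow, one_mul]

lemma odd_coeff (hQ : IsEvenQuasiPolynomial Q) {j : ℕ} (hj : Odd j) :
    Function.Odd fun r ↦ (Q r).coeff j := by
  intro r
  beta_reduce
  rw [hQ.coeff_neg, hj.neg_one_pow, neg_one_mul]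

end IsEvenQuasiPolynomial

variable {K : Type*} [Field K] [CharZero K]

lemma map_bernoulli_mem_degreeLT (n : ℕ) :
    (Polynomial.bernoulli n).map (algebraMap ℚ K) ∈ degreeLT K (n + 1) := by
  rw [mem_degreeLT, degree_lt_iff_coeff_zero]
  intro i hi
  rw [coeff_map, coeff_bernoulli, if_neg (by omega), map_zero]

lemma exists_sub_taylor_eq_X_pow {h : K} (hh : h ≠ 0) (j : ℕ) :
    ∃ Q ∈ degreeLT K (j + 2), Q - taylor (-h) Q = X ^ j := by
  set B : K[X] := (Polynomial.bernoulli (j + 1)).map (algebraMap ℚ K) with hBdef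
  have hB (y : K) : B.eval (1 + y) = B.eval y + (j + 1) * y ^ j := by
    have hcomp := congrArg (fun q ↦ (q.map (algebraMap ℚ K)).eval y)
      (bernoulli_comp_one_add_X (j + 1))
    simpa only [Polynomial.map_comp, ← hBdef, Polynomial.map_add, Polynomial.map_one, map_X,
      eval_comp, eval_add, eval_one, eval_X, Polynomial.map_mul, Polynomial.map_pow, eval_mul,
      eval_pow, Polynomial.map_natCast, eval_natCast, Nat.cast_succ, Nat.add_sub_cancel,
      nsmul_eq_mul] using hcomp
  refine ⟨(h ^ j / (j + 1)) • B.comp (C h⁻¹ * X + C 1), Submodule.smul_mem _ _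
    (comp_mem_degreeLT (map_bernoulli_mem_degreeLT _) natDegree_linear_le), ?_⟩
  refine Polynomial.funext fun x ↦ ?_
  have hj : (j : K) + 1 ≠ 0 := by exact_mod_cast j.succ_ne_zero
  have hx : h⁻¹ * (x + -h) + 1 = h⁻¹ * x := by field_simp; ring
  simp only [eval_sub, taylor_eval, eval_smul, smul_eq_mul, eval_mul, eval_C, eval_comp, eval_add,
    eval_X, eval_pow]
  rw [hx, add_comm (h⁻¹ * x) 1, hB, mul_pow, inv_pow]
  field_simp
  ring

lemma degreeLT_le_map_sub_taylor {h : K} (hh : h ≠ 0) (d : ℕ) :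
    degreeLT K d ≤ (degreeLT K (d + 1)).map (LinearMap.id - taylor (-h)) := by
  classical
  rw [degreeLT_eq_span_X_pow, Submodule.span_le]
  intro P hP
  obtain ⟨j, hj, rfl⟩ := by simpa using hP
  obtain ⟨Q, hQdeg, hQ⟩ := exists_sub_taylor_eq_X_pow hh j
  exact ⟨Q, degreeLT_mono (by omega) hQdeg, hQ⟩

lemma exists_quasiPolynomial_of_shiftAction_eq_zero [NeZero N] {b : ℤ → K}
    (hb : shiftAction ((1 - LaurentPolynomial.T N) ^ d) b = 0) :
    ∃ Q : ZMod N → K[X], (∀ r, Q r ∈ degreeLT K d) ∧ ∀ n : ℤ, b n = (Q n).eval (n : K) := by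
  induction d generalizing b with
  | zero => exact ⟨0, fun _ ↦ zero_mem _, fun n ↦ by simpa using congrFun hb n⟩
  | succ d ih =>
    rw [pow_succ, map_mul, Module.End.mul_apply] at hb
    obtain ⟨P, hPdeg, hP⟩ := ih hb
    choose Q hQdeg hQ using fun r ↦ degreeLT_le_map_sub_taylor (NeZero.ne (N : K)) d (hPdeg r)
    have hdiff (n : ℤ) : b n - b (n - N) = (Q n).eval (n : K) - (Q n).eval (n - N : K) := by
      simpa [← hQ, shiftAction_T, taylor_eval, sub_eq_add_neg] using hP n
    have hper : Function.Periodic (fun n : ℤ ↦ b n - (Q n).eval (n : K)) N := by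
      intro n
      have hstep := hdiff (n + N)
      simp only [add_sub_cancel_right, Int.cast_add, Int.cast_natCast, CharP.cast_eq_zero,
        add_zero] at hstep ⊢
      linear_combination hstep
    refine ⟨fun r ↦ Q r + C (b r.val - (Q r).eval (r.val : K)), fun r ↦ ?_, fun n ↦ ?_⟩
    · exact add_mem (hQdeg r) (mem_degreeLT.2 (degree_C_le.trans_lt
        (by exact_mod_cast d.succ_pos)))
    · have hval := periodic_eq_apply_zmod_val hper n
      rw [Int.cast_natCast, Int.cast_natCast, ZMod.natCast_zmod_val] at hval
      rw [eval_add, eval_C, ← hval, add_sub_cancel]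

lemma exists_isEvenQuasiPolynomial_of_even {b : ℤ → K} (heven : b.Even) {Q : ZMod N → K[X]}
    (hdeg : ∀ r, Q r ∈ degreeLT K d) (hQ : ∀ n : ℤ, b n = (Q n).eval (n : K)) :
    ∃ Q' : ZMod N → K[X], IsEvenQuasiPolynomial Q' ∧ (∀ r, Q' r ∈ degreeLT K d) ∧
      ∀ n : ℤ, b n = (Q' n).eval (n : K) := by
  refine ⟨fun r ↦ (2⁻¹ : K) • (Q r + (Q (-r)).comp (-X)), fun r ↦ ?_, fun r ↦ ?_, fun n ↦ ?_⟩
  · beta_reduce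
    rw [neg_neg, smul_comp, add_comp, comp_neg_X_comp_neg_X, add_comm]
  · exact Submodule.smul_mem _ _ (add_mem (hdeg r) (comp_mem_degreeLT (hdeg _)
      (natDegree_neg_le_of_le natDegree_X_le)))
  · have hneg := hQ (-n)
    rw [heven, Int.cast_neg, Int.cast_neg] at hneg
    rw [eval_smul, eval_add, eval_comp, eval_neg, eval_X, ← hneg, ← hQ, smul_eq_mul, ← two_mul,
      inv_mul_cancel_left₀ two_ne_zero]

lemma exists_isEvenQuasiPolynomial_symmetrization {ι : Type*} [Fintype ι] {p : ℕ} {ε : K}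
    (hcard : Fintype.card ι = 2 * p + 1) {e : ι → ℕ} (he : ∀ i, 0 < e i) {φ : PowerSeries K}
    (hφ : φ * ∏ i, (1 - PowerSeries.X ^ e i) =
      PowerSeries.C ε * altEsymmHigh p fun i ↦ PowerSeries.X ^ e i) :
    ∃ Q : ZMod (∏ i, e i) → K[X], IsEvenQuasiPolynomial Q ∧
      (∀ r, Q r ∈ degreeLT K (Fintype.card ι)) ∧
      ∀ n : ℤ, symmetrization ε (HahnSeries.ofPowerSeries ℤ K φ).coeff n = (Q n).eval (n : K) := by
  have : NeZero (∏ i, e i) := ⟨prod_ne_zero_iff.2 fun i _ ↦ (he i).ne'⟩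
  obtain ⟨S, hS⟩ := prod_one_sub_T_dvd_one_sub_T_prod_pow (R := K) e
  have hzero : shiftAction ((1 - LaurentPolynomial.T (∏ i, e i : ℕ)) ^ Fintype.card ι)
      (symmetrization ε (HahnSeries.ofPowerSeries ℤ K φ).coeff) = 0 := by
    rw [hS, mul_comm, map_mul, Module.End.mul_apply,
      shiftAction_symmetrization_coeff_eq_zero hcard e hφ, map_zero]
  obtain ⟨Q, hdeg, hQ⟩ := exists_quasiPolynomial_of_shiftAction_eq_zero hzero
  exact exists_isEvenQuasiPolynomial_of_even (even_symmetrization ε _) hdeg hQ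

end QuasiPolynomial

lemma LSeriesHasSum_LFunction {N : ℕ} [NeZero N] (Φ : ZMod N → ℂ) {s : ℂ} (hs : 1 < s.re) :
    LSeriesHasSum (Φ ·) s (ZMod.LFunction Φ s) := by
  rw [ZMod.LFunction_eq_LSeries Φ hs]
  exact (ZMod.LSeriesSummable_of_one_lt_re Φ hs).LSeriesHasSum

lemma LSeriesHasSum_mul_pow {c : ℕ → ℂ} {j : ℕ} {s a : ℂ} :
    LSeriesHasSum (fun n ↦ c n * (n : ℂ) ^ j) s a ↔ LSeriesHasSum c (s - j) a := by
  rw [LSeriesHasSum, LSeriesHasSum]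
  congr! 1
  ext n
  rcases eq_or_ne n 0 with rfl | hn
  · rw [LSeries.term_zero, LSeries.term_zero]
  · rw [LSeries.term_of_ne_zero hn, LSeries.term_of_ne_zero hn,
      Complex.cpow_sub _ _ (Nat.cast_ne_zero.2 hn), Complex.cpow_natCast, div_div_eq_mul_div]

lemma hasSum_shift_of_LSeriesHasSum {f : ℕ → ℂ} {s a : ℂ} (h : LSeriesHasSum f s a) {m : ℕ}
    (hm : 0 < m) (hf : ∀ n, n ≠ 0 → n < m → f n = 0) :
    HasSum (fun l : ℕ ↦ f (l + m) * ((l + m : ℕ) : ℂ) ^ (-s)) a := by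
  have hzero (n : ℕ) (hn : n ∉ Set.range (· + m)) : LSeries.term f s n = 0 := by
    rcases eq_or_ne n 0 with rfl | hn0
    · exact LSeries.term_zero f s
    · have hlt : n < m := by
        by_contra! hle
        exact hn ⟨n - m, Nat.sub_add_cancel hle⟩
      rw [LSeries.term_of_ne_zero hn0, hf n hn0 hlt, zero_div]
  have hterm : LSeries.term f s ∘ (· + m) = fun l ↦ f (l + m) * ((l + m : ℕ) : ℂ) ^ (-s) := by
    ext l
    rw [Function.comp_apply, LSeries.term_of_ne_zero (by omega), Complex.cpow_neg, div_eq_mul_inv]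
  exact hterm ▸ ((add_left_injective m).hasSum_iff hzero).2 h

section Zeta

open Polynomial

variable {N : ℕ} {Q : ZMod N → ℂ[X]} {d : ℕ}

namespace IsEvenQuasiPolynomial

lemma LFunction_coeff_eq_zero [NeZero N] (hQ : IsEvenQuasiPolynomial Q) {j k : ℕ}
    (hjk : j + k ≠ 0) : ZMod.LFunction (fun r ↦ (Q r).coeff j) (-(2 * k) - j) = 0 := by
  rcases Nat.even_or_odd' j with ⟨m, rfl | rfl⟩
  · obtain ⟨n, hn⟩ : ∃ n, m + k = n + 1 := Nat.exists_eq_succ_of_ne_zero (by omega)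
    rw [← ZMod.LFunction_neg_two_mul_nat_add_one (hQ.even_coeff (even_two_mul m)) n]
    congr 1
    have hn' : (m : ℂ) + k = n + 1 := by exact_mod_cast hn
    push_cast
    linear_combination -2 * hn'
  · rw [← ZMod.LFunction_neg_two_mul_nat_sub_one (hQ.odd_coeff (odd_two_mul_add_one m)) (m + k)]
    congr 1
    push_cast
    ring

end IsEvenQuasiPolynomial

variable [NeZero N]

/-- The analytic continuation of the Dirichlet series `∑ Q_n(n) n^{-s}`, where `Q_n` is the
constituent of a quasi-polynomial of degree `< d` at the class of `n`: expanding into monomials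
gives `∑_{j < d} L(c_j, s - j)`, where `c_j` is the periodic function of `j`-th coefficients. -/
noncomputable def quasiPolynomialZeta (Q : ZMod N → ℂ[X]) (d : ℕ) (s : ℂ) : ℂ :=
  ∑ j ∈ range d, ZMod.LFunction (fun r ↦ (Q r).coeff j) (s - j)

lemma LSeriesHasSum_quasiPolynomialZeta (hdeg : ∀ r, Q r ∈ degreeLT ℂ d) {s : ℂ}
    (hs : d < s.re) : LSeriesHasSum (fun n ↦ (Q n).eval (n : ℂ)) s (quasiPolynomialZeta Q d s) := by
  have hexpand : (fun n : ℕ ↦ (Q n).eval (n : ℂ)) =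
      ∑ j ∈ range d, fun n : ℕ ↦ (Q n).coeff j * (n : ℂ) ^ j := by
    ext n
    rw [eval_eq_sum_range_of_mem_degreeLT (hdeg n), Finset.sum_apply]
  rw [hexpand, quasiPolynomialZeta]
  refine LSeriesHasSum.sum fun j hj ↦ ?_
  have hre : 1 < (s - j).re := by
    have hjd : (j : ℝ) + 1 ≤ d := by exact_mod_cast mem_range.1 hj
    rw [Complex.sub_re, Complex.natCast_re]
    linarith
  exact LSeriesHasSum_mul_pow.2 (LSeriesHasSum_LFunction (fun r ↦ (Q r).coeff j) hre)

lemma differentiableAt_quasiPolynomialZeta (hQ : IsEvenQuasiPolynomial Q) {s : ℂ}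
    (hs : ∀ j < d, Even j → s ≠ j + 1) : DifferentiableAt ℂ (quasiPolynomialZeta Q d) s := by
  refine DifferentiableAt.fun_sum fun j hj ↦ ?_
  have hL : DifferentiableAt ℂ (ZMod.LFunction fun r ↦ (Q r).coeff j) (s - j) := by
    refine ZMod.differentiableAt_LFunction _ _ ?_
    rcases Nat.even_or_odd j with he | ho
    · exact .inl fun h ↦ hs j (mem_range.1 hj) he (by linear_combination h)
    · exact .inr (hQ.odd_coeff ho).sum_eq_zero
  exact hL.fun_comp' s (by fun_prop)

lemma quasiPolynomialZeta_neg_two_mul_nat (hQ : IsEvenQuasiPolynomial Q) {k : ℕ}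
    (hk : k ≠ 0) : quasiPolynomialZeta Q d (-(2 * k)) = 0 :=
  sum_eq_zero fun j _ ↦ hQ.LFunction_coeff_eq_zero (by omega)

lemma quasiPolynomialZeta_zero (hQ : IsEvenQuasiPolynomial Q) (hd : 0 < d) :
    quasiPolynomialZeta Q d 0 = -(Q 0).eval 0 / 2 := by
  rw [quasiPolynomialZeta, sum_eq_single_of_mem 0 (mem_range.2 hd)]
  · rw [Nat.cast_zero, sub_zero, ZMod.LFunction_apply_zero_of_even (hQ.even_coeff Even.zero),
      coeff_zero_eq_eval_zero]
  · intro j _ hj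
    simpa using hQ.LFunction_coeff_eq_zero (k := 0) (by simpa using hj)

lemma exists_continuation_LSeries_coeff {ι : Type*} [Fintype ι] {p : ℕ} {ε : ℂ}
    (hcard : Fintype.card ι = 2 * p + 1) {e : ι → ℕ} (he : ∀ i, 0 < e i) {φ : PowerSeries ℂ}
    (hφ₀ : PowerSeries.coeff 0 φ = 0)
    (hφ : φ * ∏ i, (1 - PowerSeries.X ^ e i) =
      PowerSeries.C ε * altEsymmHigh p fun i ↦ PowerSeries.X ^ e i) :
    ∃ Z : ℂ → ℂ,
      (∀ s : ℂ, (∀ k : ℕ, k ≤ p → s ≠ 2 * k + 1) → DifferentiableAt ℂ Z s) ∧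
      (∀ s : ℂ, 2 * p + 1 < s.re → LSeriesHasSum (PowerSeries.coeff · φ) s (Z s)) ∧
      Z 0 = -ε / 2 ∧
      ∀ k : ℕ, k ≠ 0 → Z (-(2 * k)) = 0 := by
  obtain ⟨Q, heven, hdeg, hQ⟩ := exists_isEvenQuasiPolynomial_symmetrization hcard he hφ
  rw [hcard] at hdeg
  have : NeZero (∏ i, e i) := ⟨prod_ne_zero_iff.2 fun i _ ↦ (he i).ne'⟩
  have hQcoeff {n : ℕ} (hn : n ≠ 0) : (Q n).eval (n : ℂ) = PowerSeries.coeff n φ := by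
    simpa [symmetrization_coeff_natCast ε φ hn] using (hQ n).symm
  have hQzero : (Q 0).eval 0 = ε := by
    simpa [symmetrization_coeff_zero ε hφ₀] using (hQ 0).symm
  refine ⟨quasiPolynomialZeta Q (2 * p + 1), fun s hs ↦ ?_, fun s hs ↦ ?_, ?_,
    fun k hk ↦ quasiPolynomialZeta_neg_two_mul_nat heven hk⟩
  · refine differentiableAt_quasiPolynomialZeta heven ?_
    rintro j hj ⟨k, rfl⟩ hsk
    exact hs k (by omega) (by rw [hsk, Nat.cast_add, two_mul])
  · rw [← LSeriesHasSum_congr s _ hQcoeff]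
    exact LSeriesHasSum_quasiPolynomialZeta hdeg (by exact_mod_cast hs)
  · rw [quasiPolynomialZeta_zero heven (by omega), hQzero]

end Zeta

/-- the coexact middle-rank ζ-function `F(s) = Σ_l g(l) (l+p+1)^{-2s}`
(for `d = 2p+1` and degeneracies `g` given by the Taylor coefficients of the
closed-form generating function) extends to a function holomorphic away from the
half-odd-integers `1/2, …, p+1/2`, with `F(0) = (−1)^{p+1}/2` and `F(−k) = 0` for
all integers `k ≥ 1`. -/
theorem middle_rank_zeta_values
    (p d : ℕ) (hd : d = 2 * p + 1) (dd : Fin d → ℕ) (hdd : ∀ i, 0 < dd i)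
    (g : ℕ → ℤ)
    (hg : (PowerSeries.mk fun n => g n) * PowerSeries.X ^ (p + 1) *
        (∏ i, (1 - PowerSeries.X ^ dd i)) =
      (-1 : PowerSeries ℤ) ^ p *
        ∑ q ∈ range (p + 1), (-1 : PowerSeries ℤ) ^ q *
          ∑ t ∈ powersetCard (d - q) (univ : Finset (Fin d)),
            ∏ i ∈ t, PowerSeries.X ^ dd i) :
    ∃ F : ℂ → ℂ,
      (∀ s : ℂ, (∀ k : ℕ, k ≤ p → s ≠ (k : ℂ) + 1 / 2) → DifferentiableAt ℂ F s) ∧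
      (∀ s : ℂ, (d : ℝ) / 2 < s.re →
        HasSum (fun l : ℕ => (g l : ℂ) * ((l : ℂ) + (p : ℂ) + 1) ^ (-(2 * s))) (F s)) ∧
      F 0 = (-1 : ℂ) ^ (p + 1) / 2 ∧
      (∀ k : ℕ, 1 ≤ k → F (-(k : ℂ)) = 0) := by
  set φ : PowerSeries ℂ := (PowerSeries.mk fun n ↦ (g n : ℂ)) * PowerSeries.X ^ (p + 1) with hφ
  have hgen : φ * ∏ i, (1 - PowerSeries.X ^ dd i) =
      PowerSeries.C ((-1) ^ p) * altEsymmHigh p fun i ↦ PowerSeries.X ^ dd i := by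
    have hmk : PowerSeries.map (Int.castRingHom ℂ) (PowerSeries.mk fun n ↦ g n) =
        PowerSeries.mk fun n ↦ (g n : ℂ) := by ext; simp
    simpa [hmk, altEsymmHigh] using congrArg (PowerSeries.map (Int.castRingHom ℂ)) hg
  have hlow (n : ℕ) (hn : n < p + 1) : PowerSeries.coeff n φ = 0 := by
    rw [hφ, PowerSeries.coeff_mul_X_pow', if_neg hn.not_ge]
  have hcoeff (l : ℕ) : PowerSeries.coeff (l + (p + 1)) φ = g l := by
    rw [hφ, PowerSeries.coeff_mul_X_pow, PowerSeries.coeff_mk]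
  obtain ⟨Z, hdiff, hsum, hzero, hneg⟩ := exists_continuation_LSeries_coeff
    (by rw [Fintype.card_fin, hd]) hdd (hlow 0 p.succ_pos) hgen
  refine ⟨fun s ↦ Z (2 * s), fun s hs ↦ ?_, fun s hs ↦ ?_, ?_, fun k hk ↦ ?_⟩
  · refine (hdiff _ fun k hk hsk ↦ hs k hk ?_).fun_comp' s (by fun_prop)
    linear_combination hsk / 2
  · have hre : 2 * p + 1 < (2 * s).re := by
      rw [hd] at hs; norm_num at hs ⊢; linarith
    have hshift := hasSum_shift_of_LSeriesHasSum (hsum _ hre) p.succ_pos fun n _ ↦ hlow n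
    simpa only [hcoeff, Nat.cast_add, Nat.cast_succ, add_assoc] using hshift
  · simp only [mul_zero, hzero, pow_succ, mul_neg_one]
  · simpa only [mul_neg] using hneg k (by omega)
end

section
/- Let d ≥ 1 be an integer. Then the following two identities hold in the polynomial ring ℤ[z,σ]: (a) (z+σ) · Σ_{p=0}^{d−1} z^p · Σ_{m=p+1}^{d} C(m−1,p)·(1−σ)^{d−m} = (1+z)^d − (1−σ)^d ; (b) (1+zσ) · [ Σ_{p=0}^{d−1} z^p · Σ_{m=d−p}^{d} C(m−1,d−p−1)·(1−σ)^{d−m} + z^d (1−σ)^d ] = (1+z)^d + z^{d+1} σ (1−σ)^d. (These identify the hemisphere absolute and relative coexact double Poincaré series with their explicit product forms.) -/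
open Finset

/-!
Since `C(k, p)` is the coefficient of `z ^ p * w ^ (k - p)` in `(z + w) ^ k`, exchanging the order
of summation turns the double series, homogenized in `z` by a second variable `w`, into the
geometric sum `∑ k < d, (z + w) ^ k * (w * y) ^ (d - 1 - k)`, with `y = 1 - σ`. Multiplication by
`z + w - w * y` therefore gives `(z + w) ^ d - (w * y) ^ d`. The absolute identity is the case
`w = 1`. By the duality `p ↔ d - 1 - p` the relative identity is the case `(z, w) = (1, z)`.
-/

/-- The numerator over `(1 - σ) ^ d` of the generating function of the absolute coexact `p`-form
degeneracies on the `d`-hemisphere, written in the variable `y = 1 - σ`. The relative one is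
obtained by replacing `p` with `d - 1 - p`. -/
def coexactNumerator {R : Type*} [Semiring R] (y : R) (d p : ℕ) : R :=
  ∑ m ∈ Icc (p + 1) d, ((m - 1).choose p : R) * y ^ (d - m)

theorem coexactNumerator_eq_sum_range {R : Type*} [Semiring R] (y : R) (d p : ℕ) :
    coexactNumerator y d p = ∑ k ∈ range d, (k.choose p : R) * y ^ (d - 1 - k) := by
  have extend_to_one : coexactNumerator y d p =
      ∑ m ∈ Ico 1 (d + 1), ((m - 1).choose p : R) * y ^ (d - m) := by
    refine sum_subset (fun m hm ↦ ?_) fun m hm hm' ↦ ?_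
    · rw [mem_Icc] at hm
      exact mem_Ico.2 (by lia)
    · rw [mem_Ico] at hm
      rw [mem_Icc] at hm'
      rw [Nat.choose_eq_zero_of_lt (by lia), Nat.cast_zero, zero_mul]
  rw [extend_to_one, sum_Ico_eq_sum_range, Nat.add_sub_cancel]
  refine sum_congr rfl fun k _ ↦ ?_
  rw [Nat.add_sub_cancel_left, Nat.sub_sub]

section CommSemiring

variable {R : Type*} [CommSemiring R]

theorem sum_range_pow_mul_pow_mul_choose (z w : R) {k d : ℕ} (hk : k < d) :
    ∑ p ∈ range d, z ^ p * w ^ (d - 1 - p) * (k.choose p : R) =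
      (z + w) ^ k * w ^ (d - 1 - k) := by
  rw [add_pow, sum_mul]
  symm
  calc ∑ p ∈ range (k + 1), z ^ p * w ^ (k - p) * (k.choose p : R) * w ^ (d - 1 - k)
      = ∑ p ∈ range (k + 1), z ^ p * w ^ (d - 1 - p) * (k.choose p : R) := by
        refine sum_congr rfl fun p hp ↦ ?_
        rw [mem_range] at hp
        rw [show d - 1 - p = (k - p) + (d - 1 - k) by lia, pow_add]
        ring
    _ = ∑ p ∈ range d, z ^ p * w ^ (d - 1 - p) * (k.choose p : R) := by
        refine sum_subset (range_subset_range.2 hk) fun p _ hp ↦ ?_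
        rw [mem_range] at hp
        rw [Nat.choose_eq_zero_of_lt (by lia), Nat.cast_zero, mul_zero]

theorem sum_range_pow_mul_pow_mul_coexactNumerator (z w y : R) (d : ℕ) :
    ∑ p ∈ range d, z ^ p * w ^ (d - 1 - p) * coexactNumerator y d p =
      ∑ k ∈ range d, (z + w) ^ k * (w * y) ^ (d - 1 - k) := by
  simp only [coexactNumerator_eq_sum_range, mul_sum, ← mul_assoc]
  rw [sum_comm]
  refine sum_congr rfl fun k hk ↦ ?_
  rw [← sum_mul, sum_range_pow_mul_pow_mul_choose z w (mem_range.1 hk), mul_pow, mul_assoc]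

theorem sum_range_pow_mul_coexactNumerator_reflect (z y : R) (d : ℕ) :
    ∑ p ∈ range d, z ^ p * coexactNumerator y d (d - 1 - p) =
      ∑ p ∈ range d, z ^ (d - 1 - p) * coexactNumerator y d p := by
  rw [← sum_range_reflect]
  refine sum_congr rfl fun p hp ↦ ?_
  rw [mem_range] at hp
  rw [show d - 1 - (d - 1 - p) = p by lia]

end CommSemiring

theorem sum_Icc_sub_choose_eq_coexactNumerator {R : Type*} [Semiring R] (y : R) {d p : ℕ}
    (hp : p < d) :
    ∑ m ∈ Icc (d - p) d, ((m - 1).choose (d - p - 1) : R) * y ^ (d - m) =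
      coexactNumerator y d (d - 1 - p) := by
  rw [coexactNumerator, show d - 1 - p + 1 = d - p by lia, Nat.sub_right_comm]

section CommRing

variable {R : Type*} [CommRing R]

theorem mul_sum_range_pow_mul_pow_mul_coexactNumerator (z w y : R) (d : ℕ) :
    (z + w - w * y) * ∑ p ∈ range d, z ^ p * w ^ (d - 1 - p) * coexactNumerator y d p =
      (z + w) ^ d - (w * y) ^ d := by
  rw [sum_range_pow_mul_pow_mul_coexactNumerator, (Commute.all _ _).mul_geom_sum₂]

theorem mul_sum_range_pow_mul_coexactNumerator (z σ : R) (d : ℕ) :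
    (z + σ) * ∑ p ∈ range d, z ^ p * coexactNumerator (1 - σ) d p =
      (1 + z) ^ d - (1 - σ) ^ d := by
  have homogeneous := mul_sum_range_pow_mul_pow_mul_coexactNumerator z 1 (1 - σ) d
  simp only [one_pow, mul_one, one_mul] at homogeneous
  linear_combination homogeneous

theorem mul_sum_range_pow_mul_coexactNumerator_reflect (z σ : R) (d : ℕ) :
    (1 + z * σ) * ∑ p ∈ range d, z ^ p * coexactNumerator (1 - σ) d (d - 1 - p) =
      (1 + z) ^ d - (z * (1 - σ)) ^ d := by
  have homogeneous := mul_sum_range_pow_mul_pow_mul_coexactNumerator 1 z (1 - σ) d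
  simp only [one_pow, one_mul] at homogeneous
  rw [sum_range_pow_mul_coexactNumerator_reflect]
  linear_combination homogeneous

theorem hemisphere_double_poincare_identities_general (z σ : R) (d : ℕ) :
    ((z + σ) * ∑ p ∈ range d, z ^ p *
        ∑ m ∈ Icc (p + 1) d, ((m - 1).choose p : R) * (1 - σ) ^ (d - m) =
      (1 + z) ^ d - (1 - σ) ^ d) ∧
    ((1 + z * σ) * ((∑ p ∈ range d, z ^ p *
          ∑ m ∈ Icc (d - p) d, ((m - 1).choose (d - p - 1) : R) * (1 - σ) ^ (d - m)) +
        z ^ d * (1 - σ) ^ d) =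
      (1 + z) ^ d + z ^ (d + 1) * σ * (1 - σ) ^ d) := by
  refine ⟨mul_sum_range_pow_mul_coexactNumerator z σ d, ?_⟩
  have relative_eq : ∑ p ∈ range d, z ^ p *
        ∑ m ∈ Icc (d - p) d, ((m - 1).choose (d - p - 1) : R) * (1 - σ) ^ (d - m) =
      ∑ p ∈ range d, z ^ p * coexactNumerator (1 - σ) d (d - 1 - p) :=
    sum_congr rfl fun p hp ↦ by
      rw [sum_Icc_sub_choose_eq_coexactNumerator (1 - σ) (mem_range.1 hp)]
  rw [relative_eq, mul_add, mul_sum_range_pow_mul_coexactNumerator_reflect, mul_pow]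
  ring

end CommRing

/-- the hemisphere absolute and relative coexact double Poincaré series,
cleared of denominators, as identities in the polynomial ring `ℤ[z,σ]`. -/
theorem hemisphere_double_poincare_identities (d : ℕ) (hd : 1 ≤ d) :
    ((MvPolynomial.X 0 + MvPolynomial.X 1 : MvPolynomial (Fin 2) ℤ) *
        ∑ p ∈ range d, (MvPolynomial.X 0 : MvPolynomial (Fin 2) ℤ) ^ p *
          ∑ m ∈ Icc (p + 1) d, ((m - 1).choose p : MvPolynomial (Fin 2) ℤ) *
            (1 - MvPolynomial.X 1) ^ (d - m) =
      (1 + MvPolynomial.X 0 : MvPolynomial (Fin 2) ℤ) ^ d -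
        (1 - MvPolynomial.X 1) ^ d) ∧
    ((1 + MvPolynomial.X 0 * MvPolynomial.X 1 : MvPolynomial (Fin 2) ℤ) *
        ((∑ p ∈ range d, (MvPolynomial.X 0 : MvPolynomial (Fin 2) ℤ) ^ p *
            ∑ m ∈ Icc (d - p) d, ((m - 1).choose (d - p - 1) : MvPolynomial (Fin 2) ℤ) *
              (1 - MvPolynomial.X 1) ^ (d - m)) +
          (MvPolynomial.X 0 : MvPolynomial (Fin 2) ℤ) ^ d *
            (1 - MvPolynomial.X 1) ^ d) =
      (1 + MvPolynomial.X 0 : MvPolynomial (Fin 2) ℤ) ^ d +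
        (MvPolynomial.X 0 : MvPolynomial (Fin 2) ℤ) ^ (d + 1) * MvPolynomial.X 1 *
          (1 - MvPolynomial.X 1) ^ d) := by
  exact hemisphere_double_poincare_identities_general _ _ d
end

section
/- Let d ≥ 1, 0 ≤ p ≤ d−1 and l ≥ 0 be integers. Then the sum of the absolute and relative hemisphere coexact degeneracies equals the coexact p-form degeneracy on the full sphere S^d: Σ_{m=p+1}^{d} C(m−1,p)·C(l+m−1, m−1) + Σ_{m=d−p}^{d} C(m−1,d−p−1)·C(l+m−1, m−1) = [ (l+d)! / ( p!·(d−p−1)!·l! ) ] · ( 1/(l+1+p) + 1/(l+d−p) ) (an identity of rational numbers). -/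
open Finset

/-!
Trinomial revision turns each summand `C(m-1, p) * C(l+m-1, m-1)` into
`C(l+p, p) * C(l+m-1, l+p)`, in which only the last factor depends on `m`, so the hockey-stick
identity evaluates the absolute degeneracy as `C(l+p, p) * C(l+d, l+p+1)`. The relative degeneracy
of `p`-forms is the absolute one of `(d-1-p)`-forms by Hodge duality; the two products have the
same multinomial prefactor and contribute the two reciprocals.
-/

/-- The degeneracy `g_a(p, l)` of the `l`-th coexact `p`-form eigenvalue on the `d`-hemisphere
with absolute boundary conditions. -/
def absoluteDegeneracy (d p l : ℕ) : ℕ :=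
  ∑ m ∈ Icc (p + 1) d, (m - 1).choose p * (l + m - 1).choose (m - 1)

/-- The degeneracy `g_r(p, l)` of the `l`-th coexact `p`-form eigenvalue on the `d`-hemisphere
with relative boundary conditions. The truncated subtractions are genuine for `p < d`. -/
def relativeDegeneracy (d p l : ℕ) : ℕ :=
  ∑ m ∈ Icc (d - p) d, (m - 1).choose (d - p - 1) * (l + m - 1).choose (m - 1)

theorem relativeDegeneracy_eq_absoluteDegeneracy {d p : ℕ} (hp : p < d) (l : ℕ) :
    relativeDegeneracy d p l = absoluteDegeneracy d (d - p - 1) l := by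
  rw [relativeDegeneracy, absoluteDegeneracy, Nat.sub_add_cancel (Nat.sub_pos_of_lt hp)]

theorem choose_mul_choose_add_left (l n p : ℕ) :
    n.choose p * (l + n).choose n = (l + p).choose p * (l + n).choose (l + p) := by
  have trinomial_revision := Nat.choose_mul (n := l + n) (Nat.le_add_right l p)
  rw [Nat.add_sub_cancel_left, Nat.add_sub_cancel_left] at trinomial_revision
  rw [← Nat.choose_symm_add, ← Nat.choose_symm_add, mul_comm, ← trinomial_revision, mul_comm]

theorem sum_Icc_choose_add_left (l p n : ℕ) :
    ∑ k ∈ Icc p n, (l + k).choose (l + p) = (l + n + 1).choose (l + p + 1) := by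
  rw [← Nat.sum_Icc_choose, ← map_add_left_Icc, sum_map]
  rfl

theorem absoluteDegeneracy_eq_choose_mul_choose (d p l : ℕ) :
    absoluteDegeneracy d p l = (l + p).choose p * (l + d).choose (l + p + 1) := by
  cases d with
  | zero =>
    rw [Nat.choose_eq_zero_of_lt (by lia : l + 0 < l + p + 1), mul_zero, absoluteDegeneracy,
      Icc_eq_empty_of_lt p.succ_pos, sum_empty]
  | succ d =>
    calc absoluteDegeneracy (d + 1) p l
        = ∑ n ∈ Icc p d, n.choose p * (l + n).choose n := by
          rw [absoluteDegeneracy, ← map_add_right_Icc, sum_map]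
          rfl
      _ = (l + p).choose p * ∑ n ∈ Icc p d, (l + n).choose (l + p) := by
          simp only [choose_mul_choose_add_left, mul_sum]
      _ = (l + p).choose p * (l + (d + 1)).choose (l + p + 1) := by
          rw [sum_Icc_choose_add_left, add_assoc l d]

section CharZero

variable {K : Type*} [Field K] [CharZero K]

theorem cast_choose_mul_cast_choose_succ (l p q : ℕ) :
    ((l + p).choose p * (l + p + 1 + q).choose (l + p + 1) : K) =
      (l + p + 1 + q).factorial / (p.factorial * q.factorial * l.factorial) *
        (1 / (l + 1 + p)) := by
  have denominator_ne_zero : (l + 1 + p : K) ≠ 0 := by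
    exact_mod_cast (by lia : l + 1 + p ≠ 0)
  have factorial_step : ((l + p + 1).factorial : K) = (l + 1 + p) * (l + p).factorial := by
    rw [Nat.factorial_succ]
    push_cast
    ring
  rw [← Nat.choose_symm_add, Nat.cast_add_choose, Nat.cast_add_choose, factorial_step]
  field_simp [Nat.cast_ne_zero.mpr (l + p).factorial_ne_zero]

theorem cast_absoluteDegeneracy {d p : ℕ} (hp : p < d) (l : ℕ) :
    (absoluteDegeneracy d p l : K) =
      (l + d).factorial / (p.factorial * (d - p - 1).factorial * l.factorial) *
        (1 / (l + 1 + p)) := by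
  have split_top : l + d = l + p + 1 + (d - p - 1) := by lia
  rw [absoluteDegeneracy_eq_choose_mul_choose, Nat.cast_mul, split_top,
    cast_choose_mul_cast_choose_succ]

end CharZero

/-- the sum of the absolute and relative hemisphere coexact degeneracies
equals the coexact `p`-form degeneracy on the full sphere `S^d`. -/
theorem hemisphere_degeneracies_sum_to_sphere
    (d p l : ℕ) (hd : 1 ≤ d) (hp : p ≤ d - 1) :
    (∑ m ∈ Icc (p + 1) d, ((m - 1).choose p : ℚ) * ((l + m - 1).choose (m - 1) : ℚ)) +
      (∑ m ∈ Icc (d - p) d, ((m - 1).choose (d - p - 1) : ℚ) *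
        ((l + m - 1).choose (m - 1) : ℚ)) =
    ((l + d).factorial : ℚ) /
        ((p.factorial : ℚ) * ((d - p - 1).factorial : ℚ) * (l.factorial : ℚ)) *
      (1 / ((l : ℚ) + 1 + (p : ℚ)) + 1 / ((l : ℚ) + (d : ℚ) - (p : ℚ))) := by
  have hpd : p < d := by lia
  have dual_dual : d - (d - p - 1) - 1 = p := by lia
  have cast_dual : (l : ℚ) + 1 + (d - p - 1 : ℕ) = l + d - p := by
    rw [Nat.sub_sub, Nat.cast_sub hpd]
    push_cast
    ring
  calc _ = (absoluteDegeneracy d p l : ℚ) + relativeDegeneracy d p l := by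
        simp only [absoluteDegeneracy, relativeDegeneracy, Nat.cast_sum, Nat.cast_mul]
    _ = (absoluteDegeneracy d p l : ℚ) + absoluteDegeneracy d (d - p - 1) l := by
        rw [relativeDegeneracy_eq_absoluteDegeneracy hpd]
    _ = _ := by
        rw [cast_absoluteDegeneracy hpd, cast_absoluteDegeneracy (by lia), dual_dual, cast_dual,
          mul_comm (p.factorial : ℚ), mul_add]
end

section
/- Let d ≥ 1 and 0 ≤ p ≤ d−1 be integers, and for l ∈ ℕ set g(p,l) = Σ_{m=p+1}^{d} C(m−1,p)·C(l+m−1, m−1). Then the accumulated degeneracy G(p,l) := Σ_{l'=0}^{l} g(p,l') − (1/2)·g(p,l) is given exactly, as rational numbers, by G(p,l) = C(d−1,p)·(l+d)!/(l!·d!) − (1/2)·[p = 0] + (1/2)·Σ_{r=1}^{d−1} ( C(r−1,p) − C(r−1,p−1) )·(l+r)!/(l!·r!), where [p = 0] is 1 if p = 0 and 0 otherwise, and C(r−1,p−1) = 0 when p = 0. -/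
open Finset

/-- The absolute coexact `p`-form degeneracy of the `l`-th eigenlevel on the
`d`-hemisphere. -/
noncomputable def hemiDeg (d p l : ℕ) : ℚ :=
  ∑ m ∈ Icc (p + 1) d, ((m - 1).choose p : ℚ) * ((l + m - 1).choose (m - 1) : ℚ)

/-!
Put `a k = C(k, p)` and `b k = C(l + k, k)`, so that `g(p,l) = ∑_{k<d} a k * b k`. The hockey-stick
identity turns `∑_{l' ≤ l} g(p,l')` into `∑_{k<d} a k * b (k + 1)`, hence
`G(p,l) = ∑_{k<d} a k * (b (k + 1) - b k / 2)`. Summation by parts collects the coefficient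
`a k - a (k + 1) / 2` of `b (k + 1)`, which by Pascal's rule is `(C(k, p) - C(k, p - 1)) / 2`; the
boundary terms are `a (d - 1) * b d` and `-a 0 * b 0 / 2 = -[p = 0] / 2`.
-/

theorem sum_range_mul_sub_mul {R : Type*} [CommRing R] (a b : ℕ → R) (c : R) (n : ℕ) :
    ∑ k ∈ range (n + 1), a k * (b (k + 1) - c * b k) =
      a n * b (n + 1) - c * (a 0 * b 0) +
        ∑ k ∈ range n, (a k - c * a (k + 1)) * b (k + 1) := by
  induction n with
  | zero => simp [mul_sub, mul_left_comm]
  | succ n ih =>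
    rw [sum_range_succ, ih, sum_range_succ _ n]
    ring

theorem sum_Icc_one_eq_sum_range {M : Type*} [AddCommMonoid M] (f : ℕ → M) (n : ℕ) :
    ∑ m ∈ Icc 1 n, f m = ∑ k ∈ range n, f (k + 1) := by
  rw [← Ico_add_one_right_eq_Icc, range_eq_Ico, sum_Ico_add']

theorem hemiDeg_eq_sum_range (d p l : ℕ) :
    hemiDeg d p l = ∑ k ∈ range d, (k.choose p : ℚ) * ((l + k).choose k : ℚ) := by
  have low_terms_vanish : ∀ m ∈ Icc 1 d, m ∉ Icc (p + 1) d →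
      ((m - 1).choose p : ℚ) * ((l + m - 1).choose (m - 1) : ℚ) = 0 := by
    intro m hm hm'
    rw [mem_Icc] at hm hm'
    rw [Nat.choose_eq_zero_of_lt (by omega), Nat.cast_zero, zero_mul]
  rw [hemiDeg, sum_subset (Icc_subset_Icc_left (by omega)) low_terms_vanish,
    sum_Icc_one_eq_sum_range]
  rfl

theorem sum_range_hemiDeg (d p l : ℕ) :
    ∑ l' ∈ range (l + 1), hemiDeg d p l' =
      ∑ k ∈ range d, (k.choose p : ℚ) * ((l + (k + 1)).choose (k + 1) : ℚ) := by
  simp only [hemiDeg_eq_sum_range]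
  rw [sum_comm]
  refine sum_congr rfl fun k _ ↦ ?_
  rw [← mul_sum, ← Nat.cast_sum, Nat.sum_range_add_choose, add_assoc]

theorem cast_succ_choose_eq_ite {R : Type*} [AddCommMonoidWithOne R] (k p : ℕ) :
    ((k + 1).choose p : R) = k.choose p + if p = 0 then 0 else (k.choose (p - 1) : R) := by
  cases p with
  | zero => simp
  | succ p => simp [Nat.choose_succ_succ', add_comm]

theorem mul_factorial_add_div_factorial_mul_factorial
    {K : Type*} [DivisionRing K] [CharZero K] (x : K) (l r : ℕ) :
    x * ((l + r).factorial : K) / ((l.factorial : K) * (r.factorial : K)) =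
      x * ((l + r).choose r : K) := by
  rw [← Nat.choose_symm_add, Nat.cast_add_choose, mul_div_assoc]

theorem sum_range_hemiDeg_sub_half_hemiDeg (n p l : ℕ) :
    (∑ l' ∈ range (l + 1), hemiDeg (n + 1) p l') - (1 / 2 : ℚ) * hemiDeg (n + 1) p l =
      (n.choose p : ℚ) * ((l + (n + 1)).choose (n + 1) : ℚ) -
        (1 / 2 : ℚ) * (if p = 0 then 1 else 0) +
        (1 / 2 : ℚ) * ∑ k ∈ range n,
          ((k.choose p : ℚ) - (if p = 0 then 0 else (k.choose (p - 1) : ℚ))) *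
            ((l + (k + 1)).choose (k + 1) : ℚ) := by
  have boundary : (Nat.choose 0 p : ℚ) * ((l + 0).choose 0 : ℚ) =
      if p = 0 then 1 else 0 := by
    cases p <;> simp
  calc
    _ = ∑ k ∈ range (n + 1), (k.choose p : ℚ) *
          (((l + (k + 1)).choose (k + 1) : ℚ) - 1 / 2 * ((l + k).choose k : ℚ)) := by
      rw [sum_range_hemiDeg, hemiDeg_eq_sum_range, mul_sum, ← sum_sub_distrib]
      exact sum_congr rfl fun k _ ↦ by ring
    _ = (n.choose p : ℚ) * ((l + (n + 1)).choose (n + 1) : ℚ) -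
          1 / 2 * (if p = 0 then 1 else 0) +
          ∑ k ∈ range n, ((k.choose p : ℚ) - 1 / 2 * ((k + 1).choose p : ℚ)) *
            ((l + (k + 1)).choose (k + 1) : ℚ) := by
      rw [← boundary]
      exact sum_range_mul_sub_mul (fun k ↦ (k.choose p : ℚ))
        (fun k ↦ ((l + k).choose k : ℚ)) (1 / 2) n
    _ = _ := by
      rw [mul_sum]
      congr 1
      refine sum_congr rfl fun k _ ↦ ?_
      rw [cast_succ_choose_eq_ite]
      ring

/-- exact closed form of the accumulated degeneracy
`G(p,l) = Σ_{l'≤l} g(p,l') − (1/2) g(p,l)` on the `d`-hemisphere. -/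
theorem accumulated_degeneracy_closed_form
    (d p : ℕ) (hd : 1 ≤ d) (hp : p ≤ d - 1) (l : ℕ) :
    (∑ l' ∈ range (l + 1), hemiDeg d p l') - (1 / 2 : ℚ) * hemiDeg d p l =
      ((d - 1).choose p : ℚ) * ((l + d).factorial : ℚ) /
          ((l.factorial : ℚ) * (d.factorial : ℚ)) -
        (1 / 2 : ℚ) * (if p = 0 then 1 else 0) +
        (1 / 2 : ℚ) * ∑ r ∈ Icc 1 (d - 1),
          (((r - 1).choose p : ℚ) -
              (if p = 0 then 0 else ((r - 1).choose (p - 1) : ℚ))) *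
            ((l + r).factorial : ℚ) / ((l.factorial : ℚ) * (r.factorial : ℚ)) := by
  obtain ⟨n, rfl⟩ := Nat.exists_eq_add_of_le' hd
  simp only [mul_factorial_add_div_factorial_mul_factorial, sum_Icc_one_eq_sum_range,
    Nat.add_sub_cancel]
  exact sum_range_hemiDeg_sub_half_hemiDeg n p l
end

section
/- Let d ≥ 1 and 0 ≤ p ≤ d−1 be integers, and for l ∈ ℕ set g(p,l) = Σ_{m=p+1}^{d} C(m−1,p)·C(l+m−1, m−1). Define the counting function N : ℝ → ℝ by N(λ) = Σ_{l ∈ ℕ, (2l+d+1)² − (d−1−2p)² ≤ 4λ} g(p,l). Then lim_{λ→∞} N(λ)/λ^{d/2} = C(d−1,p) · π^{(d+1)/2} / ( (4π)^{d/2} · Γ(1+d/2) · Γ((d+1)/2) ), i.e. Weyl's law holds for coexact p-forms on the d-hemisphere, with the constant equal to C(d−1,p)·|M|/((4π)^{d/2} Γ(1+d/2)) where |M| = π^{(d+1)/2}/Γ((d+1)/2) is the volume of the d-hemisphere. -/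
open Finset Filter

/-- The spectral counting function for coexact `p`-forms on the `d`-hemisphere:
`N(λ)` sums the degeneracies `g(p,l)` over all levels `l` with eigenvalue at most
`λ`, i.e. with `(2l+d+1)² − (d−1−2p)² ≤ 4λ`. -/
noncomputable def countingFunction (d p : ℕ) (lam : ℝ) : ℝ :=
  ∑' l : ℕ,
    if (2 * (l : ℝ) + (d : ℝ) + 1) ^ 2 - ((d : ℝ) - 1 - 2 * (p : ℝ)) ^ 2 ≤ 4 * lam then
      ∑ m ∈ Icc (p + 1) d, ((m - 1).choose p : ℝ) * ((l + m - 1).choose (m - 1) : ℝ)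
    else 0

/-!
The levels with eigenvalue at most `λ` are `0, …, K` with `K ~ √λ`. By the hockey-stick identity
the degeneracies of these levels add up to `∑ m, C(m-1,p) C(K+m,m)`, whose dominant term is
the one with `m = d`, so `N(λ) ~ C(d-1,p) K^d / d!`. Legendre's duplication formula at `(d+1)/2`
identifies `1 / d!` with the geometric constant of Weyl's law.
-/

open Asymptotics

theorem pi_rpow_div_Gamma_mul_Gamma (s : ℝ) :
    Real.pi ^ ((s + 1) / 2) /
      ((4 * Real.pi) ^ (s / 2) * Real.Gamma (1 + s / 2) * Real.Gamma ((s + 1) / 2)) =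
        (Real.Gamma (s + 1))⁻¹ := by
  have duplication : Real.Gamma ((s + 1) / 2) * Real.Gamma (1 + s / 2) =
      Real.Gamma (s + 1) * ((2 : ℝ) ^ s)⁻¹ * √Real.pi := by
    have h := Real.Gamma_mul_Gamma_add_half ((s + 1) / 2)
    rwa [show (s + 1) / 2 + 1 / 2 = 1 + s / 2 by ring, show 2 * ((s + 1) / 2) = s + 1 by ring,
      show 1 - (s + 1) = -s by ring, Real.rpow_neg zero_le_two] at h
  have four_rpow : (4 : ℝ) ^ (s / 2) = 2 ^ s := by
    rw [Real.rpow_div_two_eq_sqrt _ zero_le_four,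
      Real.sqrt_eq_iff_mul_self_eq_of_pos two_pos |>.2 (by norm_num)]
  have pi_rpow : Real.pi ^ ((s + 1) / 2) = Real.pi ^ (s / 2) * √Real.pi := by
    rw [add_div, Real.rpow_add Real.pi_pos, ← Real.sqrt_eq_rpow]
  rw [mul_assoc, mul_comm (Real.Gamma (1 + _)), duplication,
    Real.mul_rpow zero_le_four Real.pi_pos.le, four_rpow, pi_rpow]
  field_simp

theorem isEquivalent_add_choose (j k : ℕ) :
    (fun n : ℕ => ((n + j).choose k : ℝ)) ~[atTop] fun n => (n : ℝ) ^ k / k.factorial := by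
  have natCast_add : (fun n : ℕ => ((n + j : ℕ) : ℝ)) ~[atTop] fun n => (n : ℝ) := by
    simpa only [Nat.cast_add] using! IsEquivalent.refl.add_const_of_norm_tendsto_atTop
      (tendsto_norm_atTop_atTop.comp tendsto_natCast_atTop_atTop)
  exact ((isEquivalent_choose k).comp_tendsto (tendsto_add_atTop_nat j)).trans
    ((natCast_add.pow k).div .refl)

theorem isLittleO_add_choose (j : ℕ) {k d : ℕ} (hkd : k < d) :
    (fun n : ℕ => ((n + j).choose k : ℝ)) =o[atTop] fun n => (n : ℝ) ^ d := by
  have choose_isBigO : (fun n : ℕ => ((n + j).choose k : ℝ)) =O[atTop] fun n => (n : ℝ) ^ k := by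
    refine (isEquivalent_add_choose j k).isBigO.trans ?_
    simp_rw [div_eq_inv_mul]
    exact isBigO_const_mul_self _ _ _
  exact choose_isBigO.trans_isLittleO
    ((isLittleO_pow_pow_atTop_of_lt hkd).comp_tendsto tendsto_natCast_atTop_atTop)

theorem isEquivalent_sum_mul_add_choose {c : ℕ → ℝ} {k d : ℕ} (hkd : k ≤ d) (hc : c d ≠ 0) :
    (fun n : ℕ => ∑ m ∈ Icc k d, c m * ((n + m).choose m : ℝ)) ~[atTop]
      fun n => c d / d.factorial * (n : ℝ) ^ d := by
  have leading : (fun n : ℕ => c d * ((n + d).choose d : ℝ)) ~[atTop]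
      fun n => c d / d.factorial * (n : ℝ) ^ d :=
    (IsEquivalent.refl.mul (isEquivalent_add_choose d d)).congr_right
      (.of_forall fun n => (mul_comm_div _ _ _).symm)
  have lower : (fun n : ℕ => ∑ m ∈ Ico k d, c m * ((n + m).choose m : ℝ)) =o[atTop]
      fun n => c d / d.factorial * (n : ℝ) ^ d := by
    refine .fun_sum fun m hm => .const_mul_left ?_ _
    exact (isLittleO_add_choose m (mem_Ico.1 hm).2).const_mul_right
      (div_ne_zero hc (mod_cast d.factorial_ne_zero))
  refine (lower.add_isEquivalent leading).congr_left (.of_forall fun n => ?_)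
  exact sum_Ico_add_eq_sum_Icc hkd

/-- The real solution `l` of `(2l+a)² - b² = 4x` on the increasing branch: the level, not
necessarily an integer, at which the eigenvalue `(l+a/2)² - (b/2)²` equals `x`. -/
noncomputable def levelBound (a b x : ℝ) : ℝ :=
  (√(4 * x + b ^ 2) - a) / 2

theorem abs_levelBound_sub_sqrt_le (a b : ℝ) {x : ℝ} (hx : 0 ≤ x) :
    |levelBound a b x - √x| ≤ (|a| + |b|) / 2 := by
  have lower : 2 * √x ≤ √(4 * x + b ^ 2) :=
    Real.le_sqrt_of_sq_le (by nlinarith [Real.sq_sqrt hx, sq_nonneg b])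
  have upper : √(4 * x + b ^ 2) ≤ 2 * √x + |b| :=
    Real.sqrt_le_iff.2 ⟨by positivity, by
      nlinarith [Real.sq_sqrt hx, sq_abs b, mul_nonneg (Real.sqrt_nonneg x) (abs_nonneg b)]⟩
  rw [levelBound, abs_le]
  constructor <;> linarith [neg_abs_le a, le_abs_self a, abs_nonneg b]

theorem isEquivalent_levelBound (a b : ℝ) : levelBound a b ~[atTop] Real.sqrt := by
  have sub_isBigO_one : (levelBound a b - Real.sqrt) =O[atTop] fun _ => (1 : ℝ) := by
    refine .of_bound ((|a| + |b|) / 2) ?_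
    filter_upwards [eventually_ge_atTop 0] with x hx
    simpa using! abs_levelBound_sub_sqrt_le a b hx
  exact sub_isBigO_one.trans_isLittleO
    (isLittleO_one_left_iff ℝ |>.2 (tendsto_norm_atTop_atTop.comp Real.tendsto_sqrt_atTop))

theorem tendsto_levelBound_atTop (a b : ℝ) : Tendsto (levelBound a b) atTop atTop :=
  (isEquivalent_levelBound a b).symm.tendsto_atTop Real.tendsto_sqrt_atTop

theorem sq_sub_sq_le_iff_le_floor_levelBound {a b x : ℝ} (ha : 0 < a)
    (hx : 0 ≤ levelBound a b x) (l : ℕ) :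
    (2 * (l : ℝ) + a) ^ 2 - b ^ 2 ≤ 4 * x ↔ l ≤ ⌊levelBound a b x⌋₊ := by
  rw [Nat.le_floor_iff hx, levelBound, le_div_iff₀' zero_lt_two, le_sub_iff_add_le,
    Real.le_sqrt' (by positivity), sub_le_iff_le_add]

theorem tsum_levels_eq_sum_range {a b x : ℝ} (ha : 0 < a) (hx : 0 ≤ levelBound a b x)
    (g : ℕ → ℝ) :
    ∑' l : ℕ, (if (2 * (l : ℝ) + a) ^ 2 - b ^ 2 ≤ 4 * x then g l else 0) =
      ∑ l ∈ range (⌊levelBound a b x⌋₊ + 1), g l := by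
  simp_rw [sq_sub_sq_le_iff_le_floor_levelBound ha hx, ← Nat.lt_succ_iff, ← mem_range]
  rw [tsum_eq_sum fun l hl => if_neg hl]
  exact sum_congr rfl fun l hl => if_pos hl

theorem isEquivalent_tsum_levels {g : ℕ → ℝ} {C a : ℝ} {d : ℕ} (ha : 0 < a) (b : ℝ)
    (hg : (fun n : ℕ => ∑ l ∈ range (n + 1), g l) ~[atTop] fun n => C * (n : ℝ) ^ d) :
    (fun x : ℝ => ∑' l : ℕ, if (2 * (l : ℝ) + a) ^ 2 - b ^ 2 ≤ 4 * x then g l else 0) ~[atTop]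
      fun x => C * √x ^ d := by
  have floor_equiv : (fun x => (⌊levelBound a b x⌋₊ : ℝ)) ~[atTop] Real.sqrt :=
    (isEquivalent_nat_floor (R := ℝ) |>.comp_tendsto (tendsto_levelBound_atTop a b)).trans
      (isEquivalent_levelBound a b)
  have sum_equiv : (fun x => ∑ l ∈ range (⌊levelBound a b x⌋₊ + 1), g l) ~[atTop]
      fun x => C * √x ^ d :=
    (hg.comp_tendsto (tendsto_nat_floor_atTop.comp (tendsto_levelBound_atTop a b))).trans
      (IsEquivalent.refl.mul (floor_equiv.pow d))
  refine sum_equiv.congr_left ?_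
  filter_upwards [(tendsto_levelBound_atTop a b).eventually_ge_atTop 0] with x hx
  exact (tsum_levels_eq_sum_range ha hx g).symm

/-- The degeneracy `g(p,l)` of the `l`-th eigenvalue on coexact `p`-forms of the `d`-hemisphere.
The truncated subtractions are exact, since `m ≥ 1` throughout the sum. -/
def degeneracy (d p l : ℕ) : ℕ :=
  ∑ m ∈ Icc (p + 1) d, (m - 1).choose p * (l + m - 1).choose (m - 1)

theorem sum_range_degeneracy (d p n : ℕ) :
    ∑ l ∈ range (n + 1), degeneracy d p l =
      ∑ m ∈ Icc (p + 1) d, (m - 1).choose p * (n + m).choose m := by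
  simp only [degeneracy]
  rw [sum_comm]
  refine sum_congr rfl fun m hm => ?_
  obtain ⟨k, rfl⟩ := Nat.exists_eq_add_of_le' (le_of_add_le_right (mem_Icc.1 hm).1)
  simp only [Nat.add_sub_cancel, ← add_assoc, ← mul_sum, Nat.sum_range_add_choose]

theorem isEquivalent_sum_range_degeneracy {d p : ℕ} (hpd : p < d) :
    (fun n : ℕ => ∑ l ∈ range (n + 1), (degeneracy d p l : ℝ)) ~[atTop]
      fun n => ((d - 1).choose p : ℝ) / d.factorial * (n : ℝ) ^ d := by
  have choose_ne_zero : ((d - 1).choose p : ℝ) ≠ 0 :=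
    mod_cast (Nat.choose_pos (Nat.le_sub_one_of_lt hpd)).ne'
  refine (isEquivalent_sum_mul_add_choose (c := fun m => ((m - 1).choose p : ℝ)) hpd
    choose_ne_zero).congr_left (.of_forall fun n => ?_)
  simpa only [Nat.cast_sum, Nat.cast_mul] using!
    congrArg (Nat.cast (R := ℝ)) (sum_range_degeneracy d p n).symm

theorem countingFunction_eq_tsum_degeneracy (d p : ℕ) (lam : ℝ) :
    countingFunction d p lam =
      ∑' l : ℕ, if (2 * (l : ℝ) + (d + 1)) ^ 2 - ((d : ℝ) - 1 - 2 * p) ^ 2 ≤ 4 * lam then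
        (degeneracy d p l : ℝ) else 0 := by
  simp only [countingFunction, degeneracy, add_assoc, Nat.cast_sum, Nat.cast_mul]

theorem isEquivalent_countingFunction {d p : ℕ} (hpd : p < d) :
    countingFunction d p ~[atTop] fun lam => ((d - 1).choose p : ℝ) / d.factorial * √lam ^ d := by
  rw [funext (countingFunction_eq_tsum_degeneracy d p)]
  exact isEquivalent_tsum_levels d.cast_add_one_pos _ (isEquivalent_sum_range_degeneracy hpd)

/-- Weyl's law for coexact `p`-forms on the `d`-hemisphere:
`N(λ)/λ^{d/2} → C(d−1,p) |M| / ((4π)^{d/2} Γ(1+d/2))` with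
`|M| = π^{(d+1)/2}/Γ((d+1)/2)` the hemisphere volume. -/
theorem weyl_law_hemisphere (d p : ℕ) (hd : 1 ≤ d) (hp : p ≤ d - 1) :
    Tendsto (fun lam : ℝ => countingFunction d p lam / lam ^ ((d : ℝ) / 2)) atTop
      (nhds (((d - 1).choose p : ℝ) * Real.pi ^ (((d : ℝ) + 1) / 2) /
        ((4 * Real.pi) ^ ((d : ℝ) / 2) * Real.Gamma (1 + (d : ℝ) / 2) *
          Real.Gamma (((d : ℝ) + 1) / 2)))) := by
  have hpd : p < d := by omega
  rw [mul_div_assoc, pi_rpow_div_Gamma_mul_Gamma, Real.Gamma_nat_eq_factorial, ← div_eq_mul_inv]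
  refine ((isEquivalent_countingFunction hpd).div .refl).symm.tendsto_nhds ?_
  refine tendsto_const_nhds.congr' ?_
  filter_upwards [eventually_gt_atTop 0] with lam hlam
  have sqrt_pow_ne_zero : √lam ^ d ≠ 0 := (pow_pos (Real.sqrt_pos.2 hlam) d).ne'
  rw [Pi.div_apply, Real.rpow_div_two_eq_sqrt _ hlam.le, Real.rpow_natCast,
    mul_div_cancel_right₀ _ sqrt_pow_ne_zero]
end

section
/- Let d ≥ 1 be an integer, let d_1,…,d_d be positive integers, let K be a field of characteristic zero and let σ ∈ K satisfy σ ≠ 0 and σ^{d_i} ≠ 1 for all i. Then the supertrace (alternating sum over form rank) of the absolute coexact generating functions satisfies σ · Σ_{p=0}^{d−1} (−σ)^p · g_a(p,σ) + d = Σ_{i=1}^{d} 1/(1−σ^{d_i}). -/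
open Finset

/-!
The powers of `σ` cancel from `σ (-σ) ^ p g_a(p, σ)`, so the supertrace is, up to sign, a double sum
of signed elementary symmetric polynomials `e_k` in `x i = σ ^ d_i` divided by `∏ i, (1 - x i)`.
Each `e_k` occurs in it for exactly `k` values of `p`, and `∑ k, k (-1) ^ k e_k` is the derivative
of `∏ i, (1 - t x i)` at `t = 1`, so dividing by the product leaves `∑ i, x i / (1 - x i)`.
The summand `d` then turns each `x i / (1 - x i)` into `1 / (1 - x i)`.
-/

section FinsetSums

variable {ι R : Type*} [DecidableEq ι]

theorem sum_powerset_filter_mem_prod [CommSemiring R] {s : Finset ι} {i : ι} (hi : i ∈ s)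
    (f : ι → R) :
    ∑ t ∈ s.powerset with i ∈ t, ∏ j ∈ t, f j = f i * ∏ j ∈ s.erase i, (1 + f j) := by
  rw [prod_one_add, mul_sum]
  refine sum_nbij' (·.erase i) (insert i) ?_ ?_ ?_ ?_ ?_
  · intro t ht
    exact mem_powerset.2 (erase_subset_erase i (mem_powerset.1 (mem_filter.1 ht).1))
  · intro u hu
    exact mem_filter.2 ⟨mem_powerset.2 (insert_subset hi
      ((mem_powerset.1 hu).trans (erase_subset i s))), mem_insert_self i u⟩
  · intro t ht
    exact insert_erase (mem_filter.1 ht).2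
  · intro u hu
    exact erase_insert fun hiu => notMem_erase i s (mem_powerset.1 hu hiu)
  · intro t ht
    exact (mul_prod_erase t f (mem_filter.1 ht).2).symm

theorem sum_powerset_card_mul_prod [CommSemiring R] (s : Finset ι) (f : ι → R) :
    ∑ t ∈ s.powerset, (#t : R) * ∏ j ∈ t, f j =
      ∑ i ∈ s, f i * ∏ j ∈ s.erase i, (1 + f j) :=
  calc
    _ = ∑ t ∈ s.powerset, ∑ _i ∈ t, ∏ j ∈ t, f j := by simp only [sum_const, nsmul_eq_mul]
    _ = ∑ i ∈ s, ∑ t ∈ s.powerset with i ∈ t, ∏ j ∈ t, f j :=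
      sum_comm' fun t i => by simp only [mem_powerset, mem_filter]; grind
    _ = _ := sum_congr rfl fun _ hi => sum_powerset_filter_mem_prod hi f

theorem sum_range_mul_neg_one_pow_mul_esymm [CommRing R] (s : Finset ι) (x : ι → R) :
    ∑ k ∈ range (#s + 1), (k : R) * ((-1) ^ k * (s.val.map x).esymm k) =
      -∑ i ∈ s, x i * ∏ j ∈ s.erase i, (1 - x j) := by
  have graded : ∑ t ∈ s.powerset, (#t : R) * ∏ j ∈ t, -x j =
      ∑ k ∈ range (#s + 1), (k : R) * ((-1) ^ k * (s.val.map x).esymm k) := by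
    rw [sum_powerset]
    refine sum_congr rfl fun k _ => ?_
    rw [esymm_map_val, mul_sum, mul_sum]
    refine sum_congr rfl fun t ht => ?_
    rw [prod_neg, (mem_powersetCard.1 ht).2]
  rw [← graded, sum_powerset_card_mul_prod]
  simp only [neg_mul, sum_neg_distrib, ← sub_eq_add_neg]

theorem sum_mul_prod_erase_div_prod [Semifield R] (s : Finset ι) (x : ι → R) {y : ι → R}
    (hy : ∀ i ∈ s, y i ≠ 0) :
    (∑ i ∈ s, x i * ∏ j ∈ s.erase i, y j) / ∏ i ∈ s, y i = ∑ i ∈ s, x i / y i := by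
  rw [sum_div]
  refine sum_congr rfl fun i hi => ?_
  have hprod : ∏ j ∈ s.erase i, y j ≠ 0 := prod_ne_zero_iff.2 fun j hj => hy j (mem_of_mem_erase hj)
  rw [← mul_prod_erase s y hi, mul_div_mul_right _ _ hprod]

end FinsetSums

theorem sum_range_sum_range_sub {M : Type*} [AddCommMonoid M] (n : ℕ) (f : ℕ → M) :
    ∑ p ∈ range n, ∑ q ∈ range (n - p), f (n - q) = ∑ k ∈ range (n + 1), k • f k :=
  calc
    _ = ∑ q ∈ range n, ∑ _p ∈ range (n - q), f (n - q) :=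
      sum_comm' fun p q => by simp only [mem_range]; omega
    _ = ∑ q ∈ range (n + 1), (n - q) • f (n - q) := by
      simp only [sum_const, card_range, sum_range_succ, Nat.sub_self, zero_smul, add_zero]
    _ = _ := sum_range_reflect (fun k => k • f k) (n + 1)

theorem sum_range_sum_range_neg_one_pow_mul_sub {R : Type*} [CommRing R] (n : ℕ) (f : ℕ → R) :
    ∑ p ∈ range n, ∑ q ∈ range (n - p), (-1) ^ q * f (n - q) =
      (-1) ^ n * ∑ k ∈ range (n + 1), (k : R) * ((-1) ^ k * f k) := by
  have sign {p q : ℕ} (hq : q ∈ range (n - p)) : (-1 : R) ^ q = (-1) ^ n * (-1) ^ (n - q) := by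
    have hqn : n + (n - q) = q + 2 * (n - q) := by have := mem_range.1 hq; omega
    rw [← pow_add, hqn, pow_add, (even_two_mul _).neg_one_pow, mul_one]
  calc
    _ = ∑ p ∈ range n, ∑ q ∈ range (n - p), (-1) ^ n * ((-1) ^ (n - q) * f (n - q)) :=
      sum_congr rfl fun p _ => sum_congr rfl fun q hq => by rw [sign hq, mul_assoc]
    _ = _ := by
      simp only [← mul_sum, sum_range_sum_range_sub n fun k => (-1) ^ k * f k, nsmul_eq_mul]

section Coexact

variable {ι K : Type*} [Fintype ι] [Field K]

/-- The absolute coexact `p`-form degeneracy generating function `g_a(p, σ)`, with arbitrary field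
elements `x i` in place of the powers `σ ^ d_i` and `d` the cardinality of the index type. -/
def coexactGenFun (x : ι → K) (σ : K) (p : ℕ) : K :=
  (-1) ^ (Fintype.card ι + 1 + p) *
      (∑ q ∈ range (Fintype.card ι - p),
        (-1) ^ q * (univ.val.map x).esymm (Fintype.card ι - q)) /
    (σ ^ (p + 1) * ∏ i, (1 - x i))

theorem mul_neg_pow_mul_coexactGenFun (x : ι → K) {σ : K} (hσ : σ ≠ 0) (p : ℕ) :
    σ * ((-σ) ^ p * coexactGenFun x σ p) =
      -(-1) ^ Fintype.card ι *
        (∑ q ∈ range (Fintype.card ι - p),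
          (-1) ^ q * (univ.val.map x).esymm (Fintype.card ι - q)) / ∏ i, (1 - x i) := by
  have signs : (-1 : K) ^ p * (-1) ^ (Fintype.card ι + 1 + p) = -(-1) ^ Fintype.card ι := by
    rw [pow_add, mul_left_comm, pow_mul_pow_eq_one p (by norm_num), mul_one, pow_succ, mul_neg_one]
  rw [coexactGenFun, neg_pow σ, ← signs]
  field_simp
  ring

theorem supertrace_coexactGenFun (x : ι → K) {σ : K} (hσ : σ ≠ 0) (hx : ∀ i, x i ≠ 1) :
    σ * ∑ p ∈ range (Fintype.card ι), (-σ) ^ p * coexactGenFun x σ p =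
      ∑ i, x i / (1 - x i) := by
  classical
  have hx' : ∀ i ∈ univ, 1 - x i ≠ 0 := fun i _ => sub_ne_zero.2 (hx i).symm
  have numerator :
      ∑ p ∈ range (Fintype.card ι), ∑ q ∈ range (Fintype.card ι - p),
          (-1) ^ q * (univ.val.map x).esymm (Fintype.card ι - q) =
        (-1) ^ Fintype.card ι * -∑ i, x i * ∏ j ∈ univ.erase i, (1 - x j) := by
    rw [sum_range_sum_range_neg_one_pow_mul_sub, ← card_univ, sum_range_mul_neg_one_pow_mul_esymm]
  have sign : (-1 : K) ^ Fintype.card ι * (-1) ^ Fintype.card ι = 1 :=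
    pow_mul_pow_eq_one _ (by norm_num)
  rw [← sum_mul_prod_erase_div_prod univ x hx', mul_sum]
  simp only [mul_neg_pow_mul_coexactGenFun x hσ]
  rw [← sum_div, ← mul_sum, numerator, neg_mul, mul_neg, mul_neg, neg_neg, ← mul_assoc, sign,
    one_mul]

theorem supertrace_identity_general (x : ι → K) {σ : K} (hσ : σ ≠ 0) (hx : ∀ i, x i ≠ 1) :
    σ * ∑ p ∈ range (Fintype.card ι), (-σ) ^ p * coexactGenFun x σ p + Fintype.card ι =
      ∑ i, (1 - x i)⁻¹ := by
  have hcard : (Fintype.card ι : K) = ∑ _i : ι, 1 := by simp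
  rw [supertrace_coexactGenFun x hσ hx, hcard, ← sum_add_distrib]
  refine sum_congr rfl fun i _ => ?_
  have hxi : 1 - x i ≠ 0 := sub_ne_zero.2 (hx i).symm
  field_simp
  ring

end Coexact

/-- the supertrace identity
`σ Σ_{p=0}^{d-1} (−σ)^p g_a(p,σ) + d = Σ_{i=1}^d 1/(1−σ^{d_i})`. -/
theorem supertrace_identity
    (d : ℕ) (hd : 1 ≤ d) (dd : Fin d → ℕ) (hdd : ∀ i, 0 < dd i)
    (K : Type*) [Field K] [CharZero K] (σ : K) (hσ : σ ≠ 0)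
    (hσd : ∀ i, σ ^ dd i ≠ 1) :
    σ * (∑ p ∈ range d, (-σ) ^ p *
        ((-1 : K) ^ (d + 1 + p) *
            (∑ q ∈ range (d - p), (-1 : K) ^ q *
              ∑ t ∈ powersetCard (d - q) (univ : Finset (Fin d)), ∏ i ∈ t, σ ^ dd i) /
          (σ ^ (p + 1) * ∏ i, (1 - σ ^ dd i)))) + (d : K) =
      ∑ i, (1 - σ ^ dd i)⁻¹ := by
  simpa only [coexactGenFun, esymm_map_val, Fintype.card_fin] using
    supertrace_identity_general (fun i => σ ^ dd i) hσ hσd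
end

section
/- Let d ≥ 1 be an integer, let d_1,…,d_d be positive integers, let K be a field and let z, σ ∈ K satisfy z ≠ 0, σ ≠ 0, σ^{d_i} ≠ 1 for all i, z + σ ≠ 0 and 1 + zσ ≠ 0. Define w(z,σ) = G_r(z,σ) − G_a(z,σ) − z^d. Then w is anti-reciprocal of degree d−1 in the fugacity: z^{d−1} · w(1/z, σ) = − w(z, σ). -/
open Finset

/-- The relative double Poincaré series `G_r(z,σ)`. -/
noncomputable def Grel (d : ℕ) (dd : Fin d → ℕ) {K : Type*} [Field K] (z σ : K) : K :=
  (1 + z * σ)⁻¹ * ((∏ i, (z + σ ^ (dd i - 1)) / (1 - σ ^ dd i)) + z ^ (d + 1) * σ)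

/-- The absolute double Poincaré series `G_a(z,σ)`. -/
noncomputable def Gabs (d : ℕ) (dd : Fin d → ℕ) {K : Type*} [Field K] (z σ : K) : K :=
  (z + σ)⁻¹ * ((∏ i, (1 + z * σ ^ (dd i - 1)) / (1 - σ ^ dd i)) - 1)

/-- The modified difference `w(z,σ) = G_r(z,σ) − G_a(z,σ) − z^d`. -/
noncomputable def wDiff (d : ℕ) (dd : Fin d → ℕ) {K : Type*} [Field K] (z σ : K) : K :=
  Grel d dd z σ - Gabs d dd z σ - z ^ d

/-!
Write `A(z) = ∏ (z + σ^(dᵢ - 1)) / (1 - σ^dᵢ)` and `B(z) = ∏ (1 + z σ^(dᵢ - 1)) / (1 - σ^dᵢ)` for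
the products in `G_r` and `G_a`. They are reciprocal to each other, `z^d A(1/z) = B(z)`, so that
`G_r` and `G_a` are exchanged by `z ↦ 1/z` up to one monomial: `z^d G_r(1/z) = z G_a(z) + 1`.
This relation at `z` and at `1/z` determines both terms of `w(1/z)`, and the correction `-z^d` in
`w` absorbs the leftover monomials.
-/

section Reciprocity

variable {K : Type*}

theorem pow_card_mul_prod_inv_add_div {ι : Type*} [Semifield K] (s : Finset ι) (a b : ι → K)
    {z : K} (hz : z ≠ 0) :
    z ^ #s * ∏ i ∈ s, (z⁻¹ + a i) / b i = ∏ i ∈ s, (1 + z * a i) / b i := by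
  rw [← prod_const, ← prod_mul_distrib]
  refine prod_congr rfl fun i _ => ?_
  rw [← mul_div_assoc, mul_add, mul_inv_cancel₀ hz]

variable [Field K] {d : ℕ} (dd : Fin d → ℕ) {z σ : K}

theorem pow_mul_Grel_inv (hz : z ≠ 0) (hzσ : z + σ ≠ 0) :
    z ^ d * Grel d dd z⁻¹ σ = z * Gabs d dd z σ + 1 := by
  have prefactor_inv : (1 + z⁻¹ * σ)⁻¹ = z * (z + σ)⁻¹ := by
    field_simp
  have prod_inv := pow_card_mul_prod_inv_add_div univ
    (fun i => σ ^ (dd i - 1)) (fun i => 1 - σ ^ dd i) hz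
  rw [card_univ, Fintype.card_fin] at prod_inv
  have monomial_inv : z ^ d * (z⁻¹ ^ (d + 1) * σ) = z⁻¹ * σ := by
    rw [inv_pow, pow_succ]
    field_simp
  rw [Grel, Gabs, mul_left_comm, mul_add, prod_inv, monomial_inv, prefactor_inv]
  field_simp
  ring

theorem pow_mul_Gabs_inv (hz : z ≠ 0) (hzσ : 1 + z * σ ≠ 0) :
    z ^ d * Gabs d dd z⁻¹ σ = z * (Grel d dd z σ - z ^ d) := by
  have denom_ne_zero : z⁻¹ + σ ≠ 0 := by
    rw [show z⁻¹ + σ = z⁻¹ * (1 + z * σ) by field_simp]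
    exact mul_ne_zero (inv_ne_zero hz) hzσ
  have Grel_eq : Grel d dd z σ = z ^ d * (z⁻¹ * Gabs d dd z⁻¹ σ + 1) := by
    rw [← pow_mul_Grel_inv dd (inv_ne_zero hz) denom_ne_zero, inv_inv, inv_pow,
      mul_inv_cancel_left₀ (pow_ne_zero d hz)]
  rw [Grel_eq, mul_add, mul_one, add_sub_cancel_right, mul_left_comm, mul_inv_cancel_left₀ hz]

end Reciprocity

/-- `w` is anti-reciprocal of degree `d−1` in the fugacity:
`z^(d−1) w(1/z, σ) = − w(z, σ)`. -/
theorem w_antireciprocal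
    (d : ℕ) (hd : 1 ≤ d) (dd : Fin d → ℕ) (hdd : ∀ i, 0 < dd i)
    (K : Type*) [Field K] (z σ : K) (hz : z ≠ 0) (hσ : σ ≠ 0)
    (hσd : ∀ i, σ ^ dd i ≠ 1) (hzσ : z + σ ≠ 0) (hzσ' : 1 + z * σ ≠ 0) :
    z ^ (d - 1) * wDiff d dd z⁻¹ σ = - wDiff d dd z σ := by
  refine mul_left_cancel₀ hz ?_
  calc z * (z ^ (d - 1) * wDiff d dd z⁻¹ σ)
      = z ^ d * Grel d dd z⁻¹ σ - z ^ d * Gabs d dd z⁻¹ σ - z ^ d * z⁻¹ ^ d := by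
        rw [← mul_assoc, mul_pow_sub_one (by omega), wDiff, mul_sub, mul_sub]
    _ = (z * Gabs d dd z σ + 1) - z * (Grel d dd z σ - z ^ d) - 1 := by
        rw [pow_mul_Grel_inv dd hz hzσ, pow_mul_Gabs_inv dd hz hzσ', ← mul_pow,
          mul_inv_cancel₀ hz, one_pow]
    _ = z * -wDiff d dd z σ := by
        rw [wDiff]
        ring
end

section
/- Let α, β ∈ (0, 2π) be real numbers with cos α ≠ cos β. Then there exists an entire function F : ℂ → ℂ such that for every s ∈ ℂ with Re s > 1 the series Σ_{n=1}^∞ 2·( sin α · sin(nβ) − sin β · sin(nα) ) / ( (cos α − cos β) · n^s ) converges and equals F(s), and F(0) = − cot(α/2) · cot(β/2). -/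
/-!
The continuation of `∑ sin (n θ) n⁻ˢ` is the entire function `sinZeta`, and its functional equation
turns the value at `s = 0` into the value of the odd Hurwitz zeta function at `s = 1`. There the
defining series no longer converges absolutely, but after pairing the indices `n` and `-n` the terms
are `O(n⁻²)` uniformly for `s ∈ [1, 2]`. Hence the paired series is continuous up to `s = 1`, where
it is Euler's partial fraction expansion of `π cot (π a)`. This gives the value `cot (θ / 2) / 2`,
and the theorem follows from `sin x = cot (x / 2) (1 - cos x)`.
-/

open Complex HurwitzZeta Set

theorem norm_ofReal_cpow_sub_ofReal_cpow_le {c x y : ℝ} {r : ℂ} (hc : 0 < c) (hx : c ≤ x)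
    (hy : c ≤ y) (hr : r.re ≤ 1) :
    ‖(x : ℂ) ^ r - (y : ℂ) ^ r‖ ≤ ‖r‖ * c ^ (r.re - 1) * |x - y| := by
  have hderiv : ∀ t ∈ Ici c,
      HasDerivWithinAt (fun u : ℝ ↦ (u : ℂ) ^ r) (r * (t : ℂ) ^ (r - 1)) (Ici c) t := by
    intro t ht
    have ht₀ : (t : ℂ) ∈ slitPlane := ofReal_mem_slitPlane.2 (hc.trans_le ht)
    simpa using ((hasDerivAt_id (t : ℂ)).cpow_const ht₀).comp_ofReal.hasDerivWithinAt
  have hbound : ∀ t ∈ Ici c, ‖r * (t : ℂ) ^ (r - 1)‖ ≤ ‖r‖ * c ^ (r.re - 1) := by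
    intro t ht
    rw [norm_mul, norm_cpow_eq_rpow_re_of_pos (hc.trans_le ht), sub_re, one_re]
    gcongr ‖r‖ * ?_
    exact Real.rpow_le_rpow_of_nonpos hc ht (by linarith)
  exact (convex_Ici c).norm_image_sub_le_of_norm_hasDerivWithin_le hderiv hbound hy hx

theorem rpow_le_rpow_add_rpow {c p q r : ℝ} (hc : 0 < c) (hpq : p ≤ q) (hqr : q ≤ r) :
    c ^ q ≤ c ^ p + c ^ r := by
  rcases le_total c 1 with hc₁ | hc₁
  · exact (Real.rpow_le_rpow_of_exponent_ge hc hc₁ hpq).trans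
      (le_add_of_nonneg_right (Real.rpow_nonneg hc.le r))
  · exact (Real.rpow_le_rpow_of_exponent_le hc₁ hqr).trans
      (le_add_of_nonneg_left (Real.rpow_nonneg hc.le p))

theorem summable_nat_add_rpow_neg {b p : ℝ} (hb : 0 ≤ b) (hp : 1 < p) :
    Summable fun n : ℕ ↦ ((n : ℝ) + b) ^ (-p) := by
  refine ((Real.summable_one_div_nat_add_rpow b p).2 hp).congr fun n ↦ ?_
  have hnb : 0 ≤ (n : ℝ) + b := by positivity
  rw [abs_of_nonneg hnb, Real.rpow_neg hnb, one_div]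

/-- The contribution of the indices `n + 1` and `-(n + 1)` to the series
`∑_{m ∈ ℤ} sign (m + a) |m + a|⁻ˢ` of twice the odd Hurwitz zeta function, for `-1 < a < 1`.
Pairing the indices this way extends the convergence of the series beyond `1 < re s`. -/
noncomputable def pairedHurwitzTerm (a s : ℂ) (n : ℕ) : ℂ :=
  ((n : ℂ) + 1 + a) ^ (-s) - ((n : ℂ) + 1 - a) ^ (-s)

theorem pairedHurwitzTerm_one (a : ℂ) (n : ℕ) :
    pairedHurwitzTerm a 1 n = 1 / (a - (n + 1)) + 1 / (a + (n + 1)) := by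
  rw [pairedHurwitzTerm, cpow_neg_one, cpow_neg_one, ← neg_sub a, inv_neg, sub_neg_eq_add,
    add_comm _ a, one_div, one_div, add_comm]

theorem tsum_pairedHurwitzTerm_one {a : ℂ} (ha : a ∈ integerComplement) :
    ∑' n, pairedHurwitzTerm a 1 n = Real.pi * cot (Real.pi * a) - 1 / a := by
  rw [cot_series_rep' ha]
  exact tsum_congr (pairedHurwitzTerm_one a)

section RealParameter

variable {a : ℝ}

theorem norm_pairedHurwitzTerm_le (ha : |a| < 1) {s : ℂ} (hs : -1 ≤ s.re) (n : ℕ) :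
    ‖pairedHurwitzTerm a s n‖ ≤ ‖s‖ * ((n : ℝ) + (1 - |a|)) ^ (-s.re - 1) * (2 * |a|) := by
  have hc : 0 < (n : ℝ) + (1 - |a|) := by linarith [n.cast_nonneg (α := ℝ)]
  have h := norm_ofReal_cpow_sub_ofReal_cpow_le (x := n + 1 + a) (y := n + 1 - a) (r := -s) hc
    (by linarith [neg_abs_le a]) (by linarith [le_abs_self a]) (by rw [neg_re]; linarith)
  have hdiff : |(n : ℝ) + 1 + a - (n + 1 - a)| = 2 * |a| := by
    rw [← abs_two, ← abs_mul]
    ring_nf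
  rw [hdiff, norm_neg, neg_re] at h
  simpa [pairedHurwitzTerm] using h

theorem norm_pairedHurwitzTerm_ofReal_le (ha : |a| < 1) {t : ℝ} (ht : t ∈ Icc 1 2) (n : ℕ) :
    ‖pairedHurwitzTerm a t n‖ ≤
      4 * (((n : ℝ) + (1 - |a|)) ^ (-3 : ℝ) + ((n : ℝ) + (1 - |a|)) ^ (-2 : ℝ)) := by
  obtain ⟨ht₁, ht₂⟩ := ht
  have hc : 0 < (n : ℝ) + (1 - |a|) := by linarith [n.cast_nonneg (α := ℝ)]
  have hnorm : ‖(t : ℂ)‖ = t := by rw [norm_real, Real.norm_of_nonneg (by linarith)]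
  calc ‖pairedHurwitzTerm a t n‖
      ≤ t * ((n : ℝ) + (1 - |a|)) ^ (-t - 1) * (2 * |a|) := by
        simpa only [hnorm, ofReal_re] using
          norm_pairedHurwitzTerm_le ha (s := t) (by rw [ofReal_re]; linarith) n
    _ = (t * (2 * |a|)) * ((n : ℝ) + (1 - |a|)) ^ (-t - 1) := by ring
    _ ≤ 4 * (((n : ℝ) + (1 - |a|)) ^ (-3 : ℝ) + ((n : ℝ) + (1 - |a|)) ^ (-2 : ℝ)) := by
        gcongr
        · nlinarith [abs_nonneg a]
        · exact rpow_le_rpow_add_rpow hc (by linarith) (by linarith)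

theorem continuous_pairedHurwitzTerm (ha : |a| < 1) (n : ℕ) :
    Continuous fun s ↦ pairedHurwitzTerm a s n := by
  obtain ⟨ha₀, ha₁⟩ := abs_lt.1 ha
  have hn : (0 : ℝ) ≤ n := n.cast_nonneg
  have hadd : (n : ℂ) + 1 + a ≠ 0 := by
    exact_mod_cast (by linarith only [hn, ha₀] : 0 < (n : ℝ) + 1 + a).ne'
  have hsub : (n : ℂ) + 1 - a ≠ 0 := by
    exact_mod_cast (by linarith only [hn, ha₁] : 0 < (n : ℝ) + 1 - a).ne'
  exact (continuous_neg.const_cpow (.inl hadd)).sub (continuous_neg.const_cpow (.inl hsub))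

theorem continuousOn_tsum_pairedHurwitzTerm (ha : |a| < 1) :
    ContinuousOn (fun t : ℝ ↦ ∑' n, pairedHurwitzTerm a t n) (Icc 1 2) := by
  have hb : 0 ≤ 1 - |a| := by linarith
  exact continuousOn_tsum
    (fun n ↦ ((continuous_pairedHurwitzTerm ha n).comp continuous_ofReal).continuousOn)
    (((summable_nat_add_rpow_neg hb (by norm_num)).add
      (summable_nat_add_rpow_neg hb (by norm_num))).mul_left 4)
    (fun n t ht ↦ norm_pairedHurwitzTerm_ofReal_le ha ht n)

theorem hasSum_pairedHurwitzTerm (ha : a ∈ Icc 0 1) {s : ℂ} (hs : 1 < s.re) :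
    HasSum (pairedHurwitzTerm a s) (2 * hurwitzZetaOdd a s - (a : ℂ) ^ (-s)) := by
  have hadd : HasSum (fun n : ℕ ↦ ((n : ℂ) + 1 + a) ^ (-s)) (hurwitzZeta a s - (a : ℂ) ^ (-s)) := by
    simpa [cpow_neg] using (hasSum_nat_add_iff' 1).2 (hasSum_hurwitzZeta_of_one_lt_re ha hs)
  have hsub : HasSum (fun n : ℕ ↦ ((n : ℂ) + 1 - a) ^ (-s)) (hurwitzZeta (-a) s) := by
    have hreflect : ((1 - a : ℝ) : UnitAddCircle) = -a := by
      rw [AddCircle.coe_sub, AddCircle.coe_period, zero_sub]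
    have ha' : 1 - a ∈ Icc 0 1 := ⟨sub_nonneg.2 ha.2, sub_le_self 1 ha.1⟩
    simpa [cpow_neg, hreflect, add_sub_assoc] using hasSum_hurwitzZeta_of_one_lt_re ha' hs
  convert! hadd.sub hsub using 1
  rw [hurwitzZetaOdd_eq]
  ring

theorem hurwitzZetaOdd_one (ha : a ∈ Ioo 0 1) :
    hurwitzZetaOdd a 1 = Real.pi * cot (Real.pi * a) / 2 := by
  have hseries : EqOn (fun t : ℝ ↦ ∑' n, pairedHurwitzTerm a t n)
      (fun t : ℝ ↦ 2 * hurwitzZetaOdd a t - (a : ℂ) ^ (-(t : ℂ))) (Ioc 1 2) :=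
    fun t ht ↦ (hasSum_pairedHurwitzTerm (Ioo_subset_Icc_self ha) (by simpa using ht.1)).tsum_eq
  have hcont : Continuous fun t : ℝ ↦ 2 * hurwitzZetaOdd a t - (a : ℂ) ^ (-(t : ℂ)) := by
    have ha₀ : (a : ℂ) ≠ 0 := ofReal_ne_zero.2 ha.1.ne'
    exact (((differentiable_hurwitzZetaOdd a).continuous.comp continuous_ofReal).const_mul 2).sub
      (continuous_ofReal.neg.const_cpow (.inl ha₀))
  have ha_abs : |a| < 1 := by rw [abs_of_pos ha.1]; exact ha.2
  have hone := hseries.of_subset_closure (continuousOn_tsum_pairedHurwitzTerm ha_abs)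
    hcont.continuousOn Ioc_subset_Icc_self (closure_Ioc (OfNat.one_ne_ofNat 2)).ge
    (left_mem_Icc.2 one_le_two)
  have haZ : (a : ℂ) ∈ integerComplement := by
    rintro ⟨k, hk⟩
    obtain rfl : (k : ℝ) = a := by exact_mod_cast hk
    obtain ⟨hk₀, hk₁⟩ : 0 < k ∧ k < 1 := ⟨by exact_mod_cast ha.1, by exact_mod_cast ha.2⟩
    omega
  simp only [ofReal_one, tsum_pairedHurwitzTerm_one haZ, cpow_neg_one, one_div] at hone
  linear_combination -hone / 2

theorem sinZeta_zero (ha : a ∈ Ioo 0 1) : sinZeta a 0 = cot (Real.pi * a) / 2 := by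
  have hpoles : ∀ n : ℕ, (1 : ℂ) ≠ -n := fun n hn ↦ by
    have : (1 : ℤ) = -n := by exact_mod_cast hn
    omega
  have h := sinZeta_one_sub a hpoles
  have hpi : (Real.pi : ℂ) ≠ 0 := ofReal_ne_zero.2 Real.pi_ne_zero
  rw [sub_self, hurwitzZetaOdd_one ha, cpow_neg_one, Gamma_one, mul_one, mul_one,
    sin_pi_div_two] at h
  rw [h]
  field_simp

end RealParameter

theorem sinZeta_div_two_pi_zero {θ : ℝ} (hθ : θ ∈ Ioo 0 (2 * Real.pi)) :
    sinZeta ↑(θ / (2 * Real.pi)) 0 = (Real.cot (θ / 2) / 2 : ℝ) := by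
  have h2pi : 0 < 2 * Real.pi := Real.two_pi_pos
  rw [sinZeta_zero ⟨div_pos hθ.1 h2pi, (div_lt_one h2pi).2 hθ.2⟩, ← ofReal_mul, ← ofReal_cot,
    show Real.pi * (θ / (2 * Real.pi)) = θ / 2 by field_simp, ofReal_div, ofReal_ofNat]

theorem hasSum_sin_div_cpow (θ : ℝ) {s : ℂ} (hs : 1 < s.re) :
    HasSum (fun n : ℕ ↦ (Real.sin (((n : ℝ) + 1) * θ) : ℂ) / ((n : ℂ) + 1) ^ s)
      (sinZeta ↑(θ / (2 * Real.pi)) s) := by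
  have h := (hasSum_nat_add_iff' 1).2 (hasSum_nat_sinZeta (θ / (2 * Real.pi)) hs)
  simp only [Finset.sum_range_one, Nat.cast_zero, mul_zero, Real.sin_zero, ofReal_zero, zero_div,
    sub_zero] at h
  refine h.congr_fun fun n ↦ ?_
  rw [mul_div_cancel₀ θ Real.two_pi_pos.ne', mul_comm θ, Nat.cast_succ, Nat.cast_succ]

theorem sin_eq_cot_half_mul_one_sub_cos (x : ℝ) :
    Real.sin x = Real.cot (x / 2) * (1 - Real.cos x) := by
  obtain ⟨y, rfl⟩ : ∃ y, x = 2 * y := ⟨x / 2, by ring⟩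
  rw [mul_div_cancel_left₀ y two_ne_zero, Real.cot_eq_cos_div_sin, Real.sin_two_mul,
    Real.cos_two_mul, Real.cos_sq']
  rcases eq_or_ne (Real.sin y) 0 with hy | hy
  · simp [hy]
  · field_simp
    ring

/-- the partial spin-1 eta function
`η(γ,s) = 2 Σ_{n≥1} (sin α sin nβ − sin β sin nα)/((cos α − cos β) n^s)`
extends to an entire function `F` with `F(0) = − cot(α/2) cot(β/2)`. -/
theorem partial_eta_function_value_at_zero
    (α β : ℝ) (hα : α ∈ Set.Ioo 0 (2 * Real.pi)) (hβ : β ∈ Set.Ioo 0 (2 * Real.pi))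
    (hcos : Real.cos α ≠ Real.cos β) :
    ∃ F : ℂ → ℂ, Differentiable ℂ F ∧
      (∀ s : ℂ, 1 < s.re →
        HasSum (fun n : ℕ =>
          ((2 * (Real.sin α * Real.sin (((n : ℝ) + 1) * β) -
              Real.sin β * Real.sin (((n : ℝ) + 1) * α)) /
            (Real.cos α - Real.cos β) : ℝ) : ℂ) / (((n : ℂ) + 1) ^ s)) (F s)) ∧
      F 0 = ((-(Real.cot (α / 2) * Real.cot (β / 2)) : ℝ) : ℂ) := by
  refine ⟨fun s ↦ ((2 / (Real.cos α - Real.cos β) : ℝ) : ℂ) *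
    (Real.sin α * sinZeta ↑(β / (2 * Real.pi)) s - Real.sin β * sinZeta ↑(α / (2 * Real.pi)) s),
    ?_, fun s hs ↦ ?_, ?_⟩
  · exact (((differentiableAt_sinZeta _).const_mul _).sub
      ((differentiableAt_sinZeta _).const_mul _)).const_mul _
  · refine ((((hasSum_sin_div_cpow β hs).mul_left _).sub
      ((hasSum_sin_div_cpow α hs).mul_left _)).mul_left _).congr_fun fun n ↦ ?_
    push_cast
    ring
  · beta_reduce
    rw [sinZeta_div_two_pi_zero hα, sinZeta_div_two_pi_zero hβ]
    norm_cast
    rw [sin_eq_cot_half_mul_one_sub_cos α, sin_eq_cot_half_mul_one_sub_cos β]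
    field_simp [sub_ne_zero.2 hcos]
    ring
end

section
/- Let d ≥ 1 be an integer, let d_1,…,d_d be positive integers, let K be a field and let σ ∈ K satisfy σ ≠ 0 and σ^{d_i} ≠ 1 for all i. Then the complete scalar (0-form) generating functions are: (a) absolute (Neumann): 1 + σ · g_a(0,σ) = ∏_{i=1}^{d} 1/(1−σ^{d_i}); (b) relative (Dirichlet): σ · g_r(0,σ) = σ^{1+Σ_{i=1}^{d}(d_i−1)} / ∏_{i=1}^{d} (1−σ^{d_i}). -/
open Finset

/-!
Since `∏ (x_i - 1) = ∑_{q ≤ d} (-1)^q e_{d-q}(x)`, the numerator of `g_a(0, σ)` is this expansion at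
`x_i = σ^{d_i}` without its constant term `q = d`, that is, up to sign, `1 - ∏ (1 - σ^{d_i})`; the
zero mode restores the missing constant. The numerator of `g_r(0, σ)` is the single term
`e_d = σ^{∑ d_i}`, and the prefactor `σ^{-d}` lowers each degree by one.
-/

theorem prod_add_const_eq_sum_powersetCard {ι R : Type*} [CommSemiring R]
    (s : Finset ι) (f : ι → R) (c : R) :
    ∏ i ∈ s, (f i + c) =
      ∑ q ∈ range (#s + 1), c ^ q * ∑ t ∈ powersetCard (#s - q) s, ∏ i ∈ t, f i := by
  classical
  calc ∏ i ∈ s, (f i + c)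
      = ∑ t ∈ s.powerset, (∏ i ∈ t, f i) * c ^ #(s \ t) := by
        simp only [prod_add, prod_const]
    _ = ∑ k ∈ range (#s + 1), ∑ t ∈ powersetCard k s, (∏ i ∈ t, f i) * c ^ #(s \ t) :=
        sum_powerset s _
    _ = ∑ k ∈ range (#s + 1), c ^ (#s - k) * ∑ t ∈ powersetCard k s, ∏ i ∈ t, f i := by
        refine sum_congr rfl fun k _ => ?_
        rw [mul_sum]
        refine sum_congr rfl fun t ht => ?_
        obtain ⟨hts, rfl⟩ := mem_powersetCard.mp ht
        rw [card_sdiff_of_subset hts, mul_comm]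
    _ = ∑ q ∈ range (#s + 1), c ^ q * ∑ t ∈ powersetCard (#s - q) s, ∏ i ∈ t, f i := by
        rw [← sum_range_reflect]
        refine sum_congr rfl fun q hq => ?_
        rw [add_tsub_cancel_right, Nat.sub_sub_self (mem_range_succ_iff.mp hq)]

theorem neg_one_pow_mul_sum_powersetCard_eq_one_sub_prod {ι R : Type*} [CommRing R]
    (s : Finset ι) (f : ι → R) :
    (-1) ^ (#s + 1) *
        ∑ q ∈ range #s, (-1) ^ q * ∑ t ∈ powersetCard (#s - q) s, ∏ i ∈ t, f i =
      1 - ∏ i ∈ s, (1 - f i) := by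
  have expansion : ∏ i ∈ s, (f i - 1) =
      ∑ q ∈ range #s, (-1) ^ q * ∑ t ∈ powersetCard (#s - q) s, ∏ i ∈ t, f i + (-1) ^ #s := by
    simp only [sub_eq_add_neg, prod_add_const_eq_sum_powersetCard, sum_range_succ, tsub_self,
      powersetCard_zero, sum_singleton, prod_empty, mul_one]
  have sign_change : ∏ i ∈ s, (1 - f i) = (-1) ^ #s * ∏ i ∈ s, (f i - 1) := by
    simp only [← prod_neg, neg_sub]
  have sign_sq : (-1 : R) ^ #s * (-1) ^ #s = 1 := by
    rw [← mul_pow, neg_one_mul, neg_neg, one_pow]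
  rw [sign_change, expansion]
  linear_combination sign_sq

theorem prod_pow_eq_pow_card_mul_pow_sum_sub_one {ι M : Type*} [CommMonoid M]
    (s : Finset ι) {k : ι → ℕ} (hk : ∀ i ∈ s, 0 < k i) (x : M) :
    ∏ i ∈ s, x ^ k i = x ^ #s * x ^ ∑ i ∈ s, (k i - 1) := by
  rw [← prod_const, ← prod_pow_eq_pow_sum, ← prod_mul_distrib]
  exact prod_congr rfl fun i hi => (mul_pow_sub_one (hk i hi).ne' x).symm

section GeneratingFunctions

variable {d : ℕ} {K : Type*} [Field K]

/-- The absolute coexact `p`-form degeneracy generating function `g_a(p, σ)` of the degrees `dd`,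
with the elementary symmetric polynomials `e_{d-q}(σ^{d_1}, …, σ^{d_d})` written out as sums over
subsets. The sum runs over `0 ≤ q ≤ d - 1 - p` and is empty if `d ≤ p`. -/
def absoluteCoexactGF (dd : Fin d → ℕ) (p : ℕ) (σ : K) : K :=
  (-1) ^ (d + 1 + p) *
      (∑ q ∈ range (d - p), (-1) ^ q *
        ∑ t ∈ powersetCard (d - q) (univ : Finset (Fin d)), ∏ i ∈ t, σ ^ dd i) /
    (σ ^ (p + 1) * ∏ i, (1 - σ ^ dd i))

/-- The relative coexact `p`-form degeneracy generating function `g_r(p, σ)` of the degrees `dd`,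
meaningful for `p ≤ d`, in the same encoding as `absoluteCoexactGF`. -/
def relativeCoexactGF (dd : Fin d → ℕ) (p : ℕ) (σ : K) : K :=
  (-1) ^ p *
      (∑ q ∈ range (p + 1), (-1) ^ q *
        ∑ t ∈ powersetCard (d - q) (univ : Finset (Fin d)), ∏ i ∈ t, σ ^ dd i) /
    (σ ^ (d - p) * ∏ i, (1 - σ ^ dd i))

theorem absoluteCoexactGF_zero (dd : Fin d → ℕ) (σ : K) :
    absoluteCoexactGF dd 0 σ =
      (1 - ∏ i, (1 - σ ^ dd i)) / (σ * ∏ i, (1 - σ ^ dd i)) := by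
  have numerator := neg_one_pow_mul_sum_powersetCard_eq_one_sub_prod univ fun i => σ ^ dd i
  rw [card_fin] at numerator
  rw [absoluteCoexactGF, add_zero, tsub_zero, numerator, zero_add, pow_one]

theorem relativeCoexactGF_zero (dd : Fin d → ℕ) (σ : K) :
    relativeCoexactGF dd 0 σ = (∏ i, σ ^ dd i) / (σ ^ d * ∏ i, (1 - σ ^ dd i)) := by
  have powersetCard_top : powersetCard d (univ : Finset (Fin d)) = {univ} := by
    simpa only [card_fin] using powersetCard_self (univ : Finset (Fin d))
  simp only [relativeCoexactGF, pow_zero, one_mul, zero_add, sum_range_one, tsub_zero,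
    powersetCard_top, sum_singleton]

theorem one_add_mul_absoluteCoexactGF_zero {dd : Fin d → ℕ} {σ : K} (hσ : σ ≠ 0)
    (hσd : ∀ i, σ ^ dd i ≠ 1) :
    1 + σ * absoluteCoexactGF dd 0 σ = ∏ i, (1 - σ ^ dd i)⁻¹ := by
  have denominator_ne_zero : ∏ i, (1 - σ ^ dd i) ≠ 0 :=
    prod_ne_zero_iff.mpr fun i _ => sub_ne_zero.mpr (hσd i).symm
  rw [absoluteCoexactGF_zero, prod_inv_distrib]
  field_simp
  ring

theorem mul_relativeCoexactGF_zero {dd : Fin d → ℕ} (hdd : ∀ i, 0 < dd i) {σ : K} (hσ : σ ≠ 0) :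
    σ * relativeCoexactGF dd 0 σ =
      σ ^ (1 + ∑ i, (dd i - 1)) / ∏ i, (1 - σ ^ dd i) := by
  rw [relativeCoexactGF_zero, prod_pow_eq_pow_card_mul_pow_sum_sub_one univ (fun i _ => hdd i),
    card_fin, mul_div_mul_left _ _ (pow_ne_zero d hσ), ← mul_div_assoc, pow_add, pow_one]

end GeneratingFunctions

/-- the complete scalar (0-form) generating functions:
(a) absolute (Neumann): `1 + σ g_a(0,σ) = ∏ 1/(1−σ^{d_i})`;
(b) relative (Dirichlet): `σ g_r(0,σ) = σ^{1+Σ(d_i−1)} / ∏ (1−σ^{d_i})`. -/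
theorem scalar_generating_functions
    (d : ℕ) (hd : 1 ≤ d) (dd : Fin d → ℕ) (hdd : ∀ i, 0 < dd i)
    (K : Type*) [Field K] (σ : K) (hσ : σ ≠ 0) (hσd : ∀ i, σ ^ dd i ≠ 1) :
    (1 + σ *
        ((-1 : K) ^ (d + 1 + 0) *
            (∑ q ∈ range (d - 0), (-1 : K) ^ q *
              ∑ t ∈ powersetCard (d - q) (univ : Finset (Fin d)), ∏ i ∈ t, σ ^ dd i) /
          (σ ^ (0 + 1) * ∏ i, (1 - σ ^ dd i))) =
      ∏ i, (1 - σ ^ dd i)⁻¹) ∧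
    (σ *
        ((-1 : K) ^ (0 : ℕ) *
            (∑ q ∈ range (0 + 1), (-1 : K) ^ q *
              ∑ t ∈ powersetCard (d - q) (univ : Finset (Fin d)), ∏ i ∈ t, σ ^ dd i) /
          (σ ^ (d - 0) * ∏ i, (1 - σ ^ dd i))) =
      σ ^ (1 + ∑ i, (dd i - 1)) / ∏ i, (1 - σ ^ dd i)) :=
  ⟨one_add_mul_absoluteCoexactGF_zero hσ hσd, mul_relativeCoexactGF_zero hdd hσ⟩
end
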